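/- Let d ≥ 3 and ε ∈ (0,1), and fix 1 ≤ r_N ≤ N^{1−ε}; let A = B(0,r_N), B = B(0,N^{1−ε/2}), C = B(0,N/4) in T and B′ = B(0,N^{1−ε/2}/2). There exist constants c, c′ > 0 depending only on d and ε such that for all N ≥ 2: (i) sup_{x ∈ T∖B′} P_x[H_A ≤ T_C] ≤ c N^{−c′}; (ii) sup_{x ∈ T∖B} P_x[H_{A ∪ ∂_e A} ≤ t_*] ≤ c N^{−c′}; (iii) sup_{x ∈ T∖C} P_x[H_{B ∪ ∂_e B} ≤ t_*] ≤ c N^{−c′}, where t_* = (N log N)^2 and ∂_e V denotes the external vertex boundary of V. -/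

import Mathlib

open MeasureTheory Filter Classical
open scoped ENNReal NNReal

noncomputable section

namespace Frag

/-! ### Graph-theoretic basics -/

/-- Two vertices of `Fin d → R` are adjacent if they differ in exactly one
coordinate, by `±1` (Euclidean distance one). -/
def adj {d : ℕ} {R : Type*} [AddGroupWithOne R] (x y : Fin d → R) : Prop :=
  x ≠ y ∧ ∃ i : Fin d, (y i = x i + 1 ∨ x i = y i + 1) ∧ ∀ j : Fin d, j ≠ i → x j = y j

/-- The discrete torus `(ℤ/Nℤ)^d`. -/
abbrev Torus (d N : ℕ) := Fin d → ZMod N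

/-- The lattice `ℤ^d`. -/
abbrev Lat (d : ℕ) := Fin d → ℤ

instance (n : ℕ) : MeasurableSpace (ZMod n) := ⊤

/-- The `ℓ∞`-distance on the torus. -/
def torusDist {d N : ℕ} (x y : Torus d N) : ℕ :=
  Finset.univ.sup fun i : Fin d => min (x i - y i).val (y i - x i).val

/-- The `ℓ∞`-distance on the lattice. -/
def latDist {d : ℕ} (x y : Lat d) : ℕ :=
  Finset.univ.sup fun i : Fin d => (x i - y i).natAbs

/-- Closed `ℓ∞`-ball in the torus. -/
def torusBall {d N : ℕ} (x : Torus d N) (r : ℝ) : Set (Torus d N) :=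
  {y | (torusDist x y : ℝ) ≤ r}

/-- Closed `ℓ∞`-ball in the lattice. -/
def latBall {d : ℕ} (x : Lat d) (r : ℝ) : Set (Lat d) :=
  {y | (latDist x y : ℝ) ≤ r}

/-- `x` and `y` are connected by a nearest-neighbour path staying in `S`. -/
def connectedIn {α : Type*} (rel : α → α → Prop) (S : Set α) (x y : α) : Prop :=
  ∃ (n : ℕ) (p : ℕ → α), p 0 = x ∧ p n = y ∧ (∀ k, k ≤ n → p k ∈ S) ∧
    ∀ k, k < n → rel (p k) (p (k + 1))

/-- The connected component of `x` inside `S`. -/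
def compOf {α : Type*} (rel : α → α → Prop) (S : Set α) (x : α) : Set α :=
  {y | connectedIn rel S x y}

/-- `S` is a connected set. -/
def IsConnSet {α : Type*} (rel : α → α → Prop) (S : Set α) : Prop :=
  ∀ x ∈ S, ∀ y ∈ S, connectedIn rel S x y

/-- External vertex boundary. -/
def extBdry {α : Type*} (rel : α → α → Prop) (S : Set α) : Set α :=
  {y | y ∉ S ∧ ∃ x ∈ S, rel x y}

/-- Internal vertex boundary. -/
def intBdry {α : Type*} (rel : α → α → Prop) (S : Set α) : Set α :=
  {x | x ∈ S ∧ ∃ y, y ∉ S ∧ rel x y}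

/-- The cardinality of the largest connected component of `S`. -/
def maxCompSize {α : Type*} (rel : α → α → Prop) (S : Set α) : ℕ :=
  sSup {n | ∃ x ∈ S, n = (compOf rel S x).ncard}

/-- The diameter of a set with respect to a distance. -/
def diamOf {α : Type*} (dist : α → α → ℕ) (S : Set α) : ℕ :=
  sSup {n | ∃ x ∈ S, ∃ y ∈ S, n = dist x y}

/-- The canonical graph isomorphism `φ` from `B(0, N/4) ⊆ (ℤ/Nℤ)^d` onto
`B(0, N/4) ⊆ ℤ^d`, given by the signed representative of each coordinate. -/
def torusToLat {d N : ℕ} (x : Torus d N) : Lat d :=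
  fun i => if ((x i).val : ℝ) ≤ (N : ℝ) / 2 then ((x i).val : ℤ) else ((x i).val : ℤ) - (N : ℤ)

/-! ### Discrete-time simple random walk -/

/-- One-step transition probability of the simple random walk. -/
def srwStep {d : ℕ} {R : Type*} [AddGroupWithOne R] (x y : Fin d → R) : ℝ≥0∞ :=
  if adj x y then ((2 * d : ℕ) : ℝ≥0∞)⁻¹ else 0

/-- `μ` is the law on path space of the discrete-time simple random walk with
initial distribution `init`, characterized by its cylinder probabilities. -/
def IsWalkLaw {d : ℕ} {R : Type*} [AddGroupWithOne R] [MeasurableSpace R]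
    (μ : Measure (ℕ → (Fin d → R))) (init : (Fin d → R) → ℝ≥0∞) : Prop :=
  IsProbabilityMeasure μ ∧
  ∀ (n : ℕ) (w : ℕ → (Fin d → R)),
    μ {ω | ∀ k, k ≤ n → ω k = w k} =
      init (w 0) * ∏ k ∈ Finset.range n, srwStep (w k) (w (k + 1))

/-- The uniform initial distribution on the torus. -/
def unifInit (d N : ℕ) : Torus d N → ℝ≥0∞ := fun _ => ((N : ℝ≥0∞) ^ d)⁻¹

/-- The initial distribution concentrated at `x`. -/
def pointInit {α : Type*} (x : α) : α → ℝ≥0∞ := fun y => if y = x then 1 else 0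

/-- The set of sites visited in the first `t` steps. -/
def visited {α : Type*} (t : ℕ) (ω : ℕ → α) : Set α := {v | ∃ k, k ≤ t ∧ ω k = v}

/-! ### Capacity and random interlacements on `ℤ^d` -/

/-- The event that the walk never returns to `V` after time `0`. -/
def escEvent {d : ℕ} (V : Set (Lat d)) : Set (ℕ → Lat d) :=
  {w | ∀ n, 1 ≤ n → w n ∉ V}

/-- `r` is the (simple random walk) capacity of `V ⊆ ℤ^d`:
`r = Σ_{x ∈ V} P_x[H̃_V = ∞]`. -/
def IsCap (d : ℕ) (V : Set (Lat d)) (r : ℝ) : Prop :=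
  ∃ μ : Lat d → Measure (ℕ → Lat d),
    (∀ x, IsWalkLaw (μ x) (pointInit x)) ∧
    r = ∑ᶠ x ∈ V, ((μ x) (escEvent V)).toReal

/-- `I` is a random interlacement at level `u` on the probability space `(Ω, P)`:
for every finite `V ⊆ ℤ^d`, `P[I ∩ V = ∅] = exp (−u · cap V)`. -/
def IsInterlacement (d : ℕ) (u : ℝ) {Ω : Type*} [MeasurableSpace Ω]
    (P : Measure Ω) (I : Ω → Set (Lat d)) : Prop :=
  IsProbabilityMeasure P ∧
  (∀ x : Lat d, MeasurableSet {ω | x ∈ I ω}) ∧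
  ∀ V : Set (Lat d), V.Finite → ∀ r : ℝ, IsCap d V r →
    P {ω | ∀ x ∈ V, x ∉ I ω} = ENNReal.ofReal (Real.exp (-u * r))

/-- `e = η(u)`, the probability that the origin lies in an infinite component of
the vacant set `V^u = ℤ^d ∖ I^u` of a random interlacement at level `u`. -/
def IsEta (d : ℕ) (u e : ℝ) : Prop :=
  ∃ (Ω : Type) (_ : MeasurableSpace Ω) (P : Measure Ω) (I : Ω → Set (Lat d)),
    IsInterlacement d u P I ∧
    e = (P {ω | (compOf adj ((I ω)ᶜ) (0 : Lat d)).Infinite}).toReal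

/-- The critical level `u_* = inf {u ≥ 0 : η(u) = 0}`. -/
def uStar (d : ℕ) : ℝ := sInf {u | 0 ≤ u ∧ IsEta d u 0}

/-- The probability of an event `E` about a random interlacement at level `u`. -/
def intProb (d : ℕ) (u : ℝ) (E : Set (Lat d) → Prop) : ℝ :=
  sSup {p | ∃ (Ω : Type) (_ : MeasurableSpace Ω) (P : Measure Ω) (I : Ω → Set (Lat d)),
    IsInterlacement d u P I ∧ p = (P {ω | E (I ω)}).toReal}

/-- The event that `B(0,L)` is connected to the external boundary of `B(0,2L)`
by a nearest-neighbour path in `S`. -/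
def connAcross (d L : ℕ) (S : Set (Lat d)) : Prop :=
  ∃ x ∈ latBall (0 : Lat d) (L : ℝ), ∃ y ∈ extBdry adj (latBall (0 : Lat d) (2 * (L : ℝ))),
    connectedIn adj S x y

/-- The critical level `u_** = inf {u ≥ 0 : α(u) > 0}`. -/
def uStarStar (d : ℕ) : ℝ :=
  sInf {u | 0 ≤ u ∧ ∃ a : ℝ, 0 < a ∧
    Tendsto (fun L : ℕ => (L : ℝ) ^ a * intProb d u fun I => connAcross d L Iᶜ)
      atTop (nhds 0)}

/-- `u` is a strongly supercritical level for random interlacements on `ℤ^d`. -/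
def StronglySupercritical (d : ℕ) (u : ℝ) : Prop :=
  ∃ μ : ℝ, 0 < μ ∧
  ∃ (Ω : Type) (_ : MeasurableSpace Ω) (P : Measure Ω) (I : ℝ → Ω → Set (Lat d)),
    (∀ v : ℝ, 0 ≤ v → IsInterlacement d v P (I v)) ∧
    (∀ v v' : ℝ, v ≤ v' → ∀ ω, I v ω ⊆ I v' ω) ∧
    ∃ N₀ : ℕ, ∀ N : ℕ, N₀ ≤ N →
      (1 - Real.exp (-(N : ℝ) ^ μ) ≤
        (P {ω | ∃ x ∈ latBall (0 : Lat d) (N : ℝ),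
          (compOf adj ((I (u * (1 + μ)) ω)ᶜ) x).Infinite}).toReal) ∧
      (1 - Real.exp (-(N : ℝ) ^ μ) ≤
        (P {ω | ∀ S₁ S₂ : Set (Lat d),
            S₁ ⊆ (I (u * (1 - μ)) ω)ᶜ ∩ latBall 0 (N : ℝ) →
            S₂ ⊆ (I (u * (1 - μ)) ω)ᶜ ∩ latBall 0 (N : ℝ) →
            IsConnSet adj S₁ → IsConnSet adj S₂ →
            (N : ℝ) / 8 ≤ (diamOf latDist S₁ : ℝ) →
            (N : ℝ) / 8 ≤ (diamOf latDist S₂ : ℝ) →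
            ∃ x ∈ S₁, ∃ y ∈ S₂,
              connectedIn adj ((I (u * (1 + μ)) ω)ᶜ ∩ latBall 0 (2 * (N : ℝ))) x y}).toReal)

/-! ### Continuous-time walk -/

/-- Sample space for the continuous-time walk: a discrete path together with
the i.i.d. exponential interarrival gaps of the driving Poisson process. -/
abbrev CTPath (d N : ℕ) := (ℕ → Torus d N) × (ℕ → ℝ)

/-- The number of jumps performed up to time `t`. -/
def nJumps (g : ℕ → ℝ) (t : ℝ) : ℕ := sSup {n | ∑ k ∈ Finset.range n, g k ≤ t}

/-- The position of the continuous-time walk at time `t`. -/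
def ctPos {d N : ℕ} (ω : CTPath d N) (t : ℝ) : Torus d N := ω.1 (nJumps ω.2 t)

/-- `ν` is the law of an i.i.d. sequence of exponential random variables of
parameter `1`, characterized by its joint survival function. -/
def IsIIDExp (ν : Measure (ℕ → ℝ)) : Prop :=
  IsProbabilityMeasure ν ∧
  ∀ (n : ℕ) (s : ℕ → ℝ), (∀ k, 0 ≤ s k) →
    ν {g | ∀ k, k ≤ n → s k < g k} =
      ENNReal.ofReal (Real.exp (-(∑ k ∈ Finset.range (n + 1), s k)))

/-- `P` is the law of the continuous-time simple random walk `Y_t = X_{N_t}`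
with initial distribution `init`. -/
def IsCTWalk {d N : ℕ} (P : Measure (CTPath d N)) (init : Torus d N → ℝ≥0∞) : Prop :=
  ∃ (μ : Measure (ℕ → Torus d N)) (ν : Measure (ℕ → ℝ)),
    IsWalkLaw μ init ∧ IsIIDExp ν ∧ P = μ.prod ν

/-- The entrance time `H_V = inf {t ≥ 0 : Y_t ∈ V}`. -/
def hitT {d N : ℕ} (V : Set (Torus d N)) (ω : CTPath d N) : ℝ :=
  sInf {t | 0 ≤ t ∧ ctPos ω t ∈ V}

/-- The entrance time to `V` after time `s`. -/
def hitTAfter {d N : ℕ} (V : Set (Torus d N)) (ω : CTPath d N) (s : ℝ) : ℝ :=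
  sInf {t | s ≤ t ∧ ctPos ω t ∈ V}

/-- The exit time `T_V = inf {t ≥ 0 : Y_t ∉ V}`. -/
def exitT {d N : ℕ} (V : Set (Torus d N)) (ω : CTPath d N) : ℝ :=
  sInf {t | 0 ≤ t ∧ ctPos ω t ∉ V}

/-- The regeneration time `t_* = (N log N)^2`. -/
def tstar (N : ℕ) : ℝ := ((N : ℝ) * Real.log N) ^ 2

/-- The first time `t ≥ s + t_*` such that the walk has avoided `B` during the
whole interval `[t − t_*, t]`. -/
def uEndAfter {d N : ℕ} (B : Set (Torus d N)) (ω : CTPath d N) (s : ℝ) : ℝ :=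
  sInf {t | s + tstar N ≤ t ∧ ∀ r, t - tstar N ≤ r → r ≤ t → ctPos ω r ∉ B}

/-- The successive excursion times `(R_k, U_k)` between `A` and (long absences
from) `B`, with the convention `(R_0, U_0) = (0, 0)`. -/
def excTimes {d N : ℕ} (A B : Set (Torus d N)) (ω : CTPath d N) : ℕ → ℝ × ℝ
  | 0 => (0, 0)
  | k + 1 =>
      let R := hitTAfter A ω (excTimes A B ω k).2
      (R, uEndAfter B ω R)

/-- The range of the continuous-time walk during the time interval `[a, b]`. -/
def ctRange {d N : ℕ} (ω : CTPath d N) (a b : ℝ) : Set (Torus d N) :=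
  {v | ∃ t, a ≤ t ∧ t ≤ b ∧ ctPos ω t = v}

/-! ### The killed walk and the quasistationary distribution -/

/-- The action of the substochastic matrix `P^B` (walk killed on `B`) on a
vector `v`. -/
def killedMul (d N : ℕ) (B : Set (Torus d N)) (v : Torus d N → ℝ) (x : Torus d N) : ℝ :=
  ∑ᶠ y : Torus d N, if y ∉ B ∧ adj x y then v y / (2 * d) else 0

/-- `l` is an eigenvalue of the killed transition matrix `P^B`. -/
def IsKilledEigenvalue (d N : ℕ) (B : Set (Torus d N)) (l : ℝ) : Prop :=
  ∃ v : Torus d N → ℝ, v ≠ 0 ∧ (∀ x ∈ B, v x = 0) ∧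
    ∀ x, x ∉ B → killedMul d N B v x = l * v x

/-- `σ` is the quasistationary distribution on `T ∖ B`: the normalized
non-negative principal (Perron–Frobenius) eigenvector of `P^B`. -/
def IsQSD (d N : ℕ) (B : Set (Torus d N)) (σ : Torus d N → ℝ) : Prop :=
  (∀ x, 0 ≤ σ x) ∧ (∀ x ∈ B, σ x = 0) ∧ (∑ᶠ x, σ x = 1) ∧
  ∃ l : ℝ, (∀ x, x ∉ B → killedMul d N B σ x = l * σ x) ∧
    ∀ l', IsKilledEigenvalue d N B l' → l' ≤ l

/-- The Dirichlet form of the simple random walk on the torus. -/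
def dirichlet (d N : ℕ) (g : Torus d N → ℝ) : ℝ :=
  (1 / 2) * ∑ᶠ x : Torus d N, ∑ᶠ y : Torus d N,
    if adj x y then (g x - g y) ^ 2 / (2 * d * (N : ℝ) ^ d) else 0

end Frag

namespace Frag

/-! ### The one-step average -/

/-- The average of `f` over the neighbours of `y`. -/
def nbrAvg {d N : ℕ} (f : Torus d N → ℝ) (y : Torus d N) : ℝ :=
  (∑ i, (f (y + Pi.single i 1) + f (y - Pi.single i 1))) / (2 * d)

instance discreteMeasurableSpace_zmod (n : ℕ) : DiscreteMeasurableSpace (ZMod n) :=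
  ⟨fun _ => trivial⟩

lemma adj_iff_exists_single {d N : ℕ} (hN : 2 ≤ N) (y z : Torus d N) :
    adj y z ↔ ∃ i, z = y + Pi.single i 1 ∨ z = y - Pi.single i 1 := by
  have : Fact (1 < N) := ⟨hN⟩
  constructor
  · rintro ⟨-, i, h | h, hj⟩
    · refine ⟨i, Or.inl (funext fun j => ?_)⟩
      by_cases hij : j = i
      · subst hij; simp [h]
      · simp [hij, hj j hij]
    · refine ⟨i, Or.inr (funext fun j => ?_)⟩
      by_cases hij : j = i
      · subst hij; simp [h]
      · simp [hij, hj j hij]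
  · rintro ⟨i, rfl | rfl⟩
    · refine ⟨fun h => ?_, i, Or.inl (by simp), fun j hj => by simp [hj]⟩
      simpa using congrFun h i
    · refine ⟨fun h => ?_, i, Or.inr (by simp), fun j hj => by simp [hj]⟩
      simpa [eq_sub_iff_add_eq] using congrFun h i

lemma sum_srwStep_mul {d N : ℕ} [NeZero N] (hN : 3 ≤ N) (f : Torus d N → ℝ) (y : Torus d N) :
    ∑ z, (srwStep y z).toReal * f z = nbrAvg f y := by
  have : Fact (1 < N) := ⟨by omega⟩
  have h1 : (1 : ZMod N) ≠ 0 := one_ne_zero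
  have h2 : (1 : ZMod N) ≠ -1 := by
    intro h
    have h' : ((2 : ℕ) : ZMod N) = 0 := by
      push_cast
      linear_combination h
    rw [ZMod.natCast_eq_zero_iff] at h'
    exact absurd (Nat.le_of_dvd (by norm_num) h') (by omega)
  let e : Fin d × Bool → Torus d N := fun p => y + Pi.single p.1 (if p.2 then 1 else -1)
  have he : Function.Injective e := by
    rintro ⟨i, b⟩ ⟨j, b'⟩ h
    have h3 : (Pi.single i (if b then 1 else -1) : Torus d N) =
        Pi.single j (if b' then 1 else -1) := add_left_cancel h
    have h4 := congrFun h3 i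
    have hij : i = j := by
      by_contra hij
      cases b <;> simp [hij] at h4
    subst hij
    cases b <;> cases b' <;> simp_all
  have hstep : ∀ z, (srwStep y z).toReal * f z = if adj y z then f z / (2 * d) else 0 := by
    intro z
    unfold srwStep
    split_ifs
    · simp [ENNReal.toReal_inv, div_eq_inv_mul]
    · simp
  have himg : (Finset.univ.filter fun z => adj y z) = Finset.univ.image e := by
    ext z
    simp only [Finset.mem_filter, Finset.mem_univ, true_and, Finset.mem_image,
      adj_iff_exists_single (by omega : 2 ≤ N)]
    constructor
    · rintro ⟨i, rfl | rfl⟩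
      · exact ⟨(i, true), by simp [e]⟩
      · exact ⟨(i, false), by simp [e, sub_eq_add_neg, Pi.single_neg]⟩
    · rintro ⟨⟨i, b⟩, rfl⟩
      refine ⟨i, ?_⟩
      cases b
      · right; simp [e, sub_eq_add_neg, Pi.single_neg]
      · left; simp [e]
  rw [Finset.sum_congr rfl fun z _ => hstep z, ← Finset.sum_filter, himg,
    Finset.sum_image fun a _ b _ h => he h, Fintype.sum_prod_type, nbrAvg, Finset.sum_div]
  refine Finset.sum_congr rfl fun i _ => ?_
  simp [e, sub_eq_add_neg, Pi.single_neg, add_div]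

/-! ### The walk stopped on leaving a set -/

/-- The event that the path stays in `S` before time `n` and is at `y` at time `n`. -/
def aliveAt {α : Type*} (S : Set α) (n : ℕ) (y : α) : Set (ℕ → α) :=
  {ω | (∀ j < n, ω j ∈ S) ∧ ω n = y}

lemma measurableSet_eval {d N : ℕ} [NeZero N] (S : Set (Torus d N)) (n : ℕ) :
    MeasurableSet {ω : ℕ → Torus d N | ω n ∈ S} :=
  measurable_pi_apply n S.toFinite.measurableSet

lemma measure_inter_next {d N : ℕ} [NeZero N] {μ : Measure (ℕ → Torus d N)}
    {init : Torus d N → ℝ≥0∞} (hμ : IsWalkLaw μ init) (n : ℕ) (y z : Torus d N)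
    (E : Set (ℕ → Torus d N)) (hE : ∀ ω ω', (∀ k ≤ n, ω k = ω' k) → ω ∈ E → ω' ∈ E)
    (hy : ∀ ω ∈ E, ω n = y) :
    μ (E ∩ {ω | ω (n + 1) = z}) = μ E * srwStep y z := by
  let π : (ℕ → Torus d N) → (Fin (n + 1) → Torus d N) := fun ω i => ω i
  have hπ : Measurable π := measurable_pi_lambda _ fun i => measurable_pi_apply _
  have hpart : ∀ F : Set (ℕ → Torus d N), μ F = ∑ w, μ (π ⁻¹' {w} ∩ F) := by
    intro F
    have := sum_measure_preimage_singleton (μ := μ.restrict F) Finset.univ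
      (f := π) (fun w _ => hπ (measurableSet_singleton w))
    simp only [Finset.coe_univ, Set.preimage_univ, Measure.restrict_apply_univ] at this
    rw [← this]
    exact Finset.sum_congr rfl fun w _ => Measure.restrict_apply (hπ (measurableSet_singleton w))
  rw [hpart E, hpart (E ∩ _), Finset.sum_mul]
  refine Finset.sum_congr rfl fun w _ => ?_
  let w' : ℕ → Torus d N := fun k => if h : k < n + 1 then w ⟨k, h⟩ else z
  have hpre : π ⁻¹' {w} = {ω | ∀ k, k ≤ n → ω k = w' k} := by
    ext ω
    simp only [Set.mem_preimage, Set.mem_singleton_iff, Set.mem_ofPred_eq, funext_iff, π, w',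
      Fin.forall_iff]
    refine forall_congr' fun k => ⟨fun h hk => ?_, fun h hk => ?_⟩
    · rw [dif_pos (by omega)]; exact h (by omega)
    · have := h (by omega); rwa [dif_pos hk] at this
  by_cases hw : w' ∈ E
  · have hsub : π ⁻¹' {w} ⊆ E := by
      rw [hpre]
      exact fun ω hω => hE w' ω (fun k hk => (hω k hk).symm) hw
    rw [Set.inter_eq_left.2 hsub, ← Set.inter_assoc, Set.inter_eq_left.2 hsub, hpre, hμ.2 n w']
    have hz : w' (n + 1) = z := by simp [w']
    have hcyl : {ω : ℕ → Torus d N | ∀ k, k ≤ n → ω k = w' k} ∩ {ω | ω (n + 1) = z} =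
        {ω | ∀ k, k ≤ n + 1 → ω k = w' k} := by
      ext ω
      simp only [Set.mem_inter_iff, Set.mem_ofPred_eq]
      constructor
      · rintro ⟨h, h'⟩ k hk
        rcases hk.lt_or_eq with hk | rfl
        · exact h k (by omega)
        · rw [h', hz]
      · exact fun h => ⟨fun k hk => h k (by omega), by rw [h _ le_rfl, hz]⟩
    rw [hcyl, hμ.2 (n + 1) w', Finset.prod_range_succ, hy w' hw, hz, mul_assoc]
  · have hempty : π ⁻¹' {w} ∩ E = ∅ := by
      rw [hpre]
      ext ω
      simp only [Set.mem_inter_iff, Set.mem_ofPred_eq, Set.mem_empty_iff_false, iff_false, not_and]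
      exact fun h hω => hw (hE ω w' h hω)
    rw [← Set.inter_assoc, hempty]
    simp

lemma measureReal_aliveAt_succ {d N : ℕ} [NeZero N] {μ : Measure (ℕ → Torus d N)}
    {init : Torus d N → ℝ≥0∞} (hμ : IsWalkLaw μ init) (S : Set (Torus d N)) (n : ℕ)
    (z : Torus d N) :
    μ.real (aliveAt S (n + 1) z) =
      ∑ y, if y ∈ S then μ.real (aliveAt S n y) * (srwStep y z).toReal else 0 := by
  have := hμ.1
  have hpart := sum_measureReal_preimage_singleton (μ := μ.restrict (aliveAt S (n + 1) z))
    Finset.univ (f := fun ω : ℕ → Torus d N => ω n)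
    (fun y _ => measurable_pi_apply n (measurableSet_singleton y))
  simp only [Finset.coe_univ, Set.preimage_univ] at hpart
  rw [measureReal_restrict_apply MeasurableSet.univ, Set.univ_inter] at hpart
  rw [← hpart]
  refine Finset.sum_congr rfl fun y _ => ?_
  rw [measureReal_restrict_apply (measurable_pi_apply n (measurableSet_singleton y))]
  split_ifs with hy
  · rw [Measure.real, Measure.real, ← ENNReal.toReal_mul, ← measure_inter_next hμ n y z]
    · congr 2
      ext ω
      simp only [aliveAt, Set.mem_inter_iff, Set.mem_preimage, Set.mem_singleton_iff,
        Set.mem_ofPred_eq, Nat.forall_lt_succ_right]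
      constructor
      · rintro ⟨h1, ⟨h2, h3⟩, h4⟩
        exact ⟨⟨h2, h1⟩, h4⟩
      · rintro ⟨⟨h2, h1⟩, h4⟩
        exact ⟨h1, ⟨h2, h1 ▸ hy⟩, h4⟩
    · rintro ω ω' h ⟨h1, h2⟩
      exact ⟨fun j hj => h j hj.le ▸ h1 j hj, h n le_rfl ▸ h2⟩
    · exact fun ω hω => hω.2
  · have : (fun ω : ℕ → Torus d N => ω n) ⁻¹' {y} ∩ aliveAt S (n + 1) z = ∅ := by
      ext ω
      simp only [aliveAt, Set.mem_inter_iff, Set.mem_preimage, Set.mem_singleton_iff,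
        Set.mem_ofPred_eq, Set.mem_empty_iff_false, iff_false, not_and]
      rintro rfl h
      exact absurd (h n (by omega)) hy
    rw [this, measureReal_empty]

lemma measureReal_aliveAt_zero {d N : ℕ} {μ : Measure (ℕ → Torus d N)}
    {x : Torus d N} (hμ : IsWalkLaw μ (pointInit x)) (S : Set (Torus d N)) (z : Torus d N) :
    μ.real (aliveAt S 0 z) = if z = x then 1 else 0 := by
  have h := hμ.2 0 (fun _ => z)
  have h' : aliveAt S 0 z = {ω | ∀ k, k ≤ 0 → ω k = z} := by
    ext ω; simp [aliveAt]
  rw [Measure.real, h', h]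
  by_cases hz : z = x <;> simp [pointInit, hz]

lemma sum_measureReal_aliveAt {d N : ℕ} [NeZero N] {μ : Measure (ℕ → Torus d N)}
    [IsProbabilityMeasure μ] (S V : Set (Torus d N)) (n : ℕ) :
    ∑ y, (if y ∈ V then μ.real (aliveAt S n y) else 0) =
      μ.real {ω | (∀ j < n, ω j ∈ S) ∧ ω n ∈ V} := by
  have hm : ∀ y ∈ V.toFinset, MeasurableSet ((fun ω : ℕ → Torus d N => ω n) ⁻¹' {y}) :=
    fun y _ => measurable_pi_apply n (measurableSet_singleton y)
  have hpart := sum_measureReal_preimage_singleton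
    (μ := μ.restrict {ω | ∀ j < n, ω j ∈ S}) V.toFinset hm
  rw [← Finset.sum_filter, ← Set.toFinset_ofPred]
  simp only [Set.ofPred_mem_eq]
  rw [Set.coe_toFinset, measureReal_restrict_apply
    (show MeasurableSet ((fun ω : ℕ → Torus d N => ω n) ⁻¹' V) from measurableSet_eval V n)] at hpart
  have hset : {ω : ℕ → Torus d N | (∀ j < n, ω j ∈ S) ∧ ω n ∈ V} =
      (fun ω => ω n) ⁻¹' V ∩ {ω | ∀ j < n, ω j ∈ S} := by
    ext; simp [and_comm]
  rw [hset, ← hpart]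
  refine Finset.sum_congr rfl fun y hy => ?_
  rw [measureReal_restrict_apply (hm y hy)]
  congr 1
  ext; simp [aliveAt, and_comm]

/-- The expectation of `f` at time `n` on the event of staying in `S` before time `n`. -/
def aliveMean {d N : ℕ} [NeZero N] (μ : Measure (ℕ → Torus d N)) (S : Set (Torus d N))
    (f : Torus d N → ℝ) (n : ℕ) : ℝ :=
  ∑ y, μ.real (aliveAt S n y) * f y

lemma aliveMean_succ {d N : ℕ} [NeZero N] (hN : 3 ≤ N) {μ : Measure (ℕ → Torus d N)}
    {init : Torus d N → ℝ≥0∞} (hμ : IsWalkLaw μ init) (S : Set (Torus d N))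
    (f : Torus d N → ℝ) (n : ℕ) :
    aliveMean μ S f (n + 1) =
      ∑ y, if y ∈ S then μ.real (aliveAt S n y) * nbrAvg f y else 0 := by
  simp only [aliveMean, measureReal_aliveAt_succ hμ, Finset.sum_mul]
  rw [Finset.sum_comm]
  refine Finset.sum_congr rfl fun y _ => ?_
  split_ifs
  · rw [← sum_srwStep_mul hN, Finset.mul_sum]
    exact Finset.sum_congr rfl fun z _ => by ring
  · simp

/-- One step of the supermartingale inequality for the walk stopped on leaving `S`, when hitting
`D` is rewarded by `m`. -/
lemma aliveMean_succ_le {d N : ℕ} [NeZero N] (hN : 3 ≤ N) {μ : Measure (ℕ → Torus d N)}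
    {init : Torus d N → ℝ≥0∞} (hμ : IsWalkLaw μ init) {S D : Set (Torus d N)}
    (hSD : Disjoint S D) {f : Torus d N → ℝ} (hf : ∀ y, 0 ≤ f y) {m δ : ℝ}
    (hm : ∀ y ∈ D, m ≤ f y) (hδ : ∀ y ∈ S, nbrAvg f y ≤ f y + δ) (n : ℕ) :
    aliveMean μ S f (n + 1) + m * μ.real {ω | (∀ j < n, ω j ∈ S) ∧ ω n ∈ D} ≤
      aliveMean μ S f n + δ * μ.real {ω | (∀ j < n, ω j ∈ S) ∧ ω n ∈ S} := by
  have := hμ.1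
  rw [aliveMean_succ hN hμ, ← sum_measureReal_aliveAt, ← sum_measureReal_aliveAt, aliveMean,
    Finset.mul_sum, Finset.mul_sum, ← Finset.sum_add_distrib, ← Finset.sum_add_distrib]
  refine Finset.sum_le_sum fun y _ => ?_
  have h0 : 0 ≤ μ.real (aliveAt S n y) := measureReal_nonneg
  by_cases hS : y ∈ S
  · have hD : y ∉ D := Set.disjoint_left.1 hSD hS
    simp only [hS, hD, if_true, if_false]
    nlinarith [hδ y hS]
  · by_cases hD : y ∈ D
    · simp only [hS, hD, if_true, if_false]
      nlinarith [hm y hD]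
    · simp only [hS, hD, if_false]
      nlinarith [hf y]

lemma aliveMean_zero {d N : ℕ} [NeZero N] {μ : Measure (ℕ → Torus d N)}
    {x : Torus d N} (hμ : IsWalkLaw μ (pointInit x)) (S : Set (Torus d N)) (f : Torus d N → ℝ) :
    aliveMean μ S f 0 = f x := by
  simp [aliveMean, measureReal_aliveAt_zero hμ]

lemma aliveMean_nonneg {d N : ℕ} [NeZero N] {μ : Measure (ℕ → Torus d N)}
    (S : Set (Torus d N)) {f : Torus d N → ℝ} (hf : ∀ y, 0 ≤ f y) (n : ℕ) :
    0 ≤ aliveMean μ S f n :=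
  Finset.sum_nonneg fun y _ => mul_nonneg measureReal_nonneg (hf y)

/-- If `f ≥ 0` increases on average by at most `δ` on `S` and `f ≥ m` on `D`, then the walk hits
`D` on leaving `S` before time `n` with probability at most `(f x + n δ) / m`. -/
lemma mul_measureReal_hit_le {d N : ℕ} [NeZero N] (hN : 3 ≤ N) {μ : Measure (ℕ → Torus d N)}
    {x : Torus d N} (hμ : IsWalkLaw μ (pointInit x)) {S D : Set (Torus d N)}
    (hSD : Disjoint S D) {f : Torus d N → ℝ} (hf : ∀ y, 0 ≤ f y) {m δ : ℝ} (hm0 : 0 ≤ m)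
    (hδ0 : 0 ≤ δ) (hm : ∀ y ∈ D, m ≤ f y) (hδ : ∀ y ∈ S, nbrAvg f y ≤ f y + δ) (n : ℕ) :
    m * μ.real {ω | ∃ k < n, (∀ j < k, ω j ∈ S) ∧ ω k ∈ D} ≤ f x + n * δ := by
  have := hμ.1
  suffices h : aliveMean μ S f n +
      m * μ.real {ω | ∃ k < n, (∀ j < k, ω j ∈ S) ∧ ω k ∈ D} ≤ f x + n * δ by
    linarith [aliveMean_nonneg (μ := μ) S hf n]
  induction n with
  | zero => simp [aliveMean_zero hμ]
  | succ n ih =>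
    have h1 := aliveMean_succ_le hN hμ hSD hf hm hδ n
    have h2 : μ.real {ω : ℕ → Torus d N | ∃ k < n + 1, (∀ j < k, ω j ∈ S) ∧ ω k ∈ D} ≤
        μ.real {ω | ∃ k < n, (∀ j < k, ω j ∈ S) ∧ ω k ∈ D} +
          μ.real {ω | (∀ j < n, ω j ∈ S) ∧ ω n ∈ D} := by
      refine (measureReal_mono fun ω => ?_).trans (measureReal_union_le _ _)
      rintro ⟨k, hk, h⟩
      rcases (Nat.lt_succ_iff.1 hk).lt_or_eq with hk | rfl
      · exact Or.inl ⟨k, hk, h⟩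
      · exact Or.inr h
    have h3 : μ.real {ω : ℕ → Torus d N | (∀ j < n, ω j ∈ S) ∧ ω n ∈ S} ≤ 1 := measureReal_le_one
    push_cast
    nlinarith [mul_le_mul_of_nonneg_left h2 hm0, mul_le_mul_of_nonneg_left h3 hδ0]

lemma mul_measure_hit_le {d N : ℕ} [NeZero N] (hN : 3 ≤ N) {μ : Measure (ℕ → Torus d N)}
    {x : Torus d N} (hμ : IsWalkLaw μ (pointInit x)) {S D : Set (Torus d N)}
    (hSD : Disjoint S D) {f : Torus d N → ℝ} (hf : ∀ y, 0 ≤ f y) {m : ℝ} (hm0 : 0 < m)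
    (hm : ∀ y ∈ D, m ≤ f y) (hS : ∀ y ∈ S, nbrAvg f y ≤ f y) :
    μ.real {ω | ∃ k, (∀ j < k, ω j ∈ S) ∧ ω k ∈ D} ≤ f x / m := by
  have := hμ.1
  have hU : {ω : ℕ → Torus d N | ∃ k, (∀ j < k, ω j ∈ S) ∧ ω k ∈ D} =
      ⋃ n, {ω | ∃ k < n, (∀ j < k, ω j ∈ S) ∧ ω k ∈ D} := by
    ext ω
    simp only [Set.mem_ofPred_eq, Set.mem_iUnion]
    exact ⟨fun ⟨k, h⟩ => ⟨k + 1, k, by omega, h⟩, fun ⟨_, k, _, h⟩ => ⟨k, h⟩⟩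
  refine ENNReal.toReal_le_of_le_ofReal (div_nonneg (hf x) hm0.le) ?_
  have hmono : Monotone fun n => {ω : ℕ → Torus d N | ∃ k < n, (∀ j < k, ω j ∈ S) ∧ ω k ∈ D} := by
    rintro a b hab ω ⟨k, hk, h⟩
    exact ⟨k, hk.trans_le hab, h⟩
  rw [hU, hmono.measure_iUnion]
  refine iSup_le fun n => ?_
  rw [ENNReal.le_ofReal_iff_toReal_le (measure_ne_top _ _) (div_nonneg (hf x) hm0.le),
    le_div_iff₀ hm0, mul_comm]
  simpa [Measure.real] using mul_measureReal_hit_le hN hμ hSD hf hm0.le le_rfl hm (by simpa using hS) n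

lemma measure_forall_mem_eq_zero {d N : ℕ} [NeZero N] (hN : 3 ≤ N)
    {μ : Measure (ℕ → Torus d N)} {x : Torus d N} (hμ : IsWalkLaw μ (pointInit x))
    {S : Set (Torus d N)} {f : Torus d N → ℝ} (hf : ∀ y, 0 ≤ f y) {η : ℝ} (hη : 0 < η)
    (hS : ∀ y ∈ S, nbrAvg f y ≤ f y - η) :
    μ {ω | ∀ j, ω j ∈ S} = 0 := by
  have := hμ.1
  set q := μ.real {ω : ℕ → Torus d N | ∀ j, ω j ∈ S} with hq
  have hbound : ∀ n : ℕ, aliveMean μ S f n + n * (η * q) ≤ f x := by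
    intro n
    induction n with
    | zero => simp [aliveMean_zero hμ]
    | succ n ih =>
      have h1 := aliveMean_succ_le hN hμ (Set.disjoint_empty S) hf (m := 0) (δ := -η)
        (by simp) (fun y hy => by linarith [hS y hy]) n
      have h2 : q ≤ μ.real {ω : ℕ → Torus d N | (∀ j < n, ω j ∈ S) ∧ ω n ∈ S} :=
        measureReal_mono fun ω hω => ⟨fun j _ => hω j, hω n⟩
      push_cast
      nlinarith
  have hq0 : q ≤ 0 := by
    by_contra! hq0
    obtain ⟨n, hn⟩ := exists_nat_gt (f x / (η * q))
    rw [div_lt_iff₀ (by positivity)] at hn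
    linarith [hbound n, aliveMean_nonneg (μ := μ) S hf n]
  exact (measureReal_eq_zero_iff).1 (le_antisymm hq0 measureReal_nonneg)

/-- The walk on the torus visits the origin almost surely. -/
lemma measure_never_zero {d N : ℕ} [NeZero N] (hd : 1 ≤ d) (hN : 3 ≤ N)
    {μ : Measure (ℕ → Torus d N)} {x : Torus d N} (hμ : IsWalkLaw μ (pointInit x)) :
    μ {ω | ∀ j, ω j ≠ 0} = 0 := by
  have hd' : (1 : ℝ) ≤ d := by exact_mod_cast hd
  set β : ℝ := (4 * d)⁻¹ with hβ
  have hβ0 : 0 < β := by positivity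
  have hβ1 : β ≤ 1 := by
    rw [hβ]; exact inv_le_one_of_one_le₀ (by linarith)
  let s : Torus d N → ℕ := fun y => ∑ i, (y i).val
  have hs : ∀ y, s y ≤ d * N := fun y =>
    (Finset.sum_le_sum fun i _ => (ZMod.val_lt (y i)).le).trans (by simp)
  refine measure_forall_mem_eq_zero hN hμ (S := {0}ᶜ) (f := fun y => 1 - β ^ s y)
    (fun y => sub_nonneg.2 (pow_le_one₀ hβ0.le hβ1)) (pow_pos hβ0 (d * N)) fun y hy => ?_
  obtain ⟨i, hi⟩ : ∃ i, y i ≠ 0 := by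
    by_contra! h
    exact hy (funext h)
  have hstep : s (y - Pi.single i 1) + 1 = s y := by
    simp only [s]
    rw [← Finset.add_sum_erase _ _ (Finset.mem_univ i),
      ← Finset.add_sum_erase _ (fun j => (y j).val) (Finset.mem_univ i)]
    have h1 : ((y - Pi.single i 1 : Torus d N) i).val + 1 = (y i).val := by
      have : Fact (1 < N) := ⟨by omega⟩
      have hv : (y i).val ≠ 0 := by simpa [ZMod.val_eq_zero] using hi
      have : (1 : ZMod N).val ≤ (y i).val := by rw [ZMod.val_one]; omega
      rw [Pi.sub_apply, Pi.single_eq_same, ZMod.val_sub this, ZMod.val_one]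
      omega
    have h2 : ∀ j ∈ Finset.univ.erase i, ((y - Pi.single i 1 : Torus d N) j).val = (y j).val := by
      intro j hj
      simp [Finset.ne_of_mem_erase hj]
    rw [Finset.sum_congr rfl h2, ← h1]
    ring
  have hpow : β ^ s (y - Pi.single i 1) = 4 * d * β ^ s y := by
    rw [← hstep, pow_succ, hβ]
    field_simp
  have hsum : 4 * d * β ^ s y ≤
      ∑ j, (β ^ s (y + Pi.single j 1) + β ^ s (y - Pi.single j 1)) := by
    rw [← hpow]
    refine le_trans ?_ (Finset.single_le_sum (f := fun j =>
      β ^ s (y + Pi.single j 1) + β ^ s (y - Pi.single j 1)) (fun j _ => by positivity)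
      (Finset.mem_univ i))
    have : 0 ≤ β ^ s (y + Pi.single i 1) := by positivity
    linarith
  have hlow : β ^ (d * N) ≤ β ^ s y := pow_le_pow_of_le_one hβ0.le hβ1 (hs y)
  have havg : nbrAvg (fun y => 1 - β ^ s y) y =
      1 - (∑ j, (β ^ s (y + Pi.single j 1) + β ^ s (y - Pi.single j 1))) / (2 * d) := by
    have h1 : ∑ j : Fin d, ((1 - β ^ s (y + Pi.single j 1)) + (1 - β ^ s (y - Pi.single j 1))) =
        2 * d - ∑ j, (β ^ s (y + Pi.single j 1) + β ^ s (y - Pi.single j 1)) := by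
      rw [eq_sub_iff_add_eq, ← Finset.sum_add_distrib]
      rw [Finset.sum_congr rfl (g := fun _ => (2 : ℝ)) fun j _ => by ring]
      simp [mul_comm]
    rw [nbrAvg, h1, sub_div, div_self (by positivity)]
  rw [havg]
  have : 2 * β ^ s y ≤
      (∑ j, (β ^ s (y + Pi.single j 1) + β ^ s (y - Pi.single j 1))) / (2 * d) := by
    rw [le_div_iff₀ (by positivity)]
    linarith
  linarith

/-! ### The jump times -/

lemma IsIIDExp.measureReal_gt {ν : Measure (ℕ → ℝ)} (hν : IsIIDExp ν) (s : ℕ → ℝ)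
    (hs : ∀ k, 0 ≤ s k) (n : ℕ) :
    ν.real {g | ∀ k, k ≤ n → s k < g k} = Real.exp (-(∑ k ∈ Finset.range (n + 1), s k)) := by
  rw [Measure.real, hν.2 n s hs, ENNReal.toReal_ofReal (Real.exp_pos _).le]

lemma measurableSet_gap_gt (k : ℕ) (a : ℝ) : MeasurableSet {g : ℕ → ℝ | a < g k} :=
  measurableSet_lt measurable_const (measurable_pi_apply k)

lemma IsIIDExp.measure_gap_nonpos {ν : Measure (ℕ → ℝ)} (hν : IsIIDExp ν) :
    ν {g | ∃ k, g k ≤ 0} = 0 := by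
  have := hν.1
  have hU : {g : ℕ → ℝ | ∃ k, g k ≤ 0} = ⋃ k, {g | 0 < g k}ᶜ := by
    ext g; simp
  rw [hU, measure_iUnion_null_iff]
  intro k
  rw [prob_compl_eq_zero_iff (measurableSet_gap_gt k 0)]
  refine le_antisymm prob_le_one ?_
  have h := hν.2 k (fun _ => 0) fun _ => le_rfl
  simp only [Finset.sum_const_zero, neg_zero, Real.exp_zero, ENNReal.ofReal_one] at h
  rw [← h]
  exact measure_mono fun g hg => hg k le_rfl

lemma IsIIDExp.measureReal_gap_gt_one_of_subset {ν : Measure (ℕ → ℝ)} (hν : IsIIDExp ν)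
    (J : Finset ℕ) :
    ν.real {g | ∀ k ∈ J, 1 < g k} = Real.exp (-(J.card : ℝ)) := by
  have := hν.1
  obtain ⟨n, hn⟩ := J.exists_nat_subset_range
  have h := hν.measureReal_gt (fun k => if k ∈ J then 1 else 0)
    (fun k => by split_ifs <;> norm_num) n
  have hJ : (Finset.range (n + 1)).filter (· ∈ J) = J := by
    ext k
    simp only [Finset.mem_filter, Finset.mem_range, and_iff_right_iff_imp]
    exact fun hk => (Finset.mem_range.1 (hn hk)).trans (Nat.lt_succ_self n)
  rw [Finset.sum_boole, hJ] at h
  rw [← h]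
  refine measureReal_congr ?_
  have hpos : ∀ᵐ g ∂ν, ∀ k, 0 < g k := by
    rw [ae_iff]
    simpa using hν.measure_gap_nonpos
  filter_upwards [hpos] with g hg
  refine propext ⟨fun h k _ => ?_, fun h k hk => ?_⟩
  · split_ifs with hk
    exacts [h k hk, hg k]
  · have := h k (Nat.lt_succ_iff.1 ((Finset.mem_range.1 (hn hk)).trans (Nat.lt_succ_self n)))
    simpa [hk] using this

/-- The indicator that the `k`-th gap exceeds one, centred. -/
def centredLongGap (k : ℕ) (g : ℕ → ℝ) : ℝ :=
  Set.indicator {g : ℕ → ℝ | 1 < g k} 1 g - Real.exp (-1)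

lemma integrable_mul_centredLongGap {ν : Measure (ℕ → ℝ)} [IsProbabilityMeasure ν] (j k : ℕ) :
    Integrable (fun g => centredLongGap j g * centredLongGap k g) ν := by
  have hm : ∀ k, Measurable (centredLongGap k) := fun k =>
    (measurable_one.indicator (measurableSet_gap_gt k 1)).sub_const _
  have hb : ∀ k g, |centredLongGap k g| ≤ 1 := by
    intro k g
    have h0 := Real.exp_pos (-1)
    have h1 : Real.exp (-1) ≤ 1 := Real.exp_le_one_iff.2 (by norm_num)
    rw [abs_le]
    by_cases h : g ∈ {g : ℕ → ℝ | 1 < g k}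
    · simp only [centredLongGap, Set.indicator_of_mem h, Pi.one_apply]
      constructor <;> linarith
    · simp only [centredLongGap, Set.indicator_of_notMem h]
      constructor <;> linarith
  refine Integrable.of_bound ((hm j).mul (hm k)).aestronglyMeasurable 1 (ae_of_all _ fun g => ?_)
  rw [Real.norm_eq_abs, abs_mul]
  exact mul_le_one₀ (hb j g) (abs_nonneg _) (hb k g)

lemma IsIIDExp.integral_mul_centredLongGap {ν : Measure (ℕ → ℝ)} (hν : IsIIDExp ν) (j k : ℕ) :
    ∫ g, centredLongGap j g * centredLongGap k g ∂ν ≤ if j = k then 1 else 0 := by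
  have := hν.1
  set q := Real.exp (-1) with hq
  have hone : ∀ k, ν.real {g | 1 < g k} = q := fun k => by
    simpa using hν.measureReal_gap_gt_one_of_subset {k}
  have hmeas : MeasurableSet ({g : ℕ → ℝ | 1 < g j} ∩ {g | 1 < g k}) :=
    (measurableSet_gap_gt j 1).inter (measurableSet_gap_gt k 1)
  have hint : ∀ s : Set (ℕ → ℝ), MeasurableSet s →
      Integrable (s.indicator (1 : (ℕ → ℝ) → ℝ)) ν := fun s hs =>
    (integrable_const (1 : ℝ)).indicator hs
  have hexp : ∀ g : ℕ → ℝ, centredLongGap j g * centredLongGap k g =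
      ({g : ℕ → ℝ | 1 < g j} ∩ {g | 1 < g k}).indicator 1 g
        - q * ({g : ℕ → ℝ | 1 < g j}).indicator 1 g
        - q * ({g : ℕ → ℝ | 1 < g k}).indicator 1 g + q ^ 2 := by
    intro g
    have : ({g : ℕ → ℝ | 1 < g j} ∩ {g | 1 < g k}).indicator (1 : (ℕ → ℝ) → ℝ) g =
        ({g : ℕ → ℝ | 1 < g j}).indicator 1 g * ({g : ℕ → ℝ | 1 < g k}).indicator 1 g := by
      rw [Set.inter_indicator_one]; rfl
    rw [this]
    simp only [centredLongGap, ← hq]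
    ring
  have hval : ∫ g, centredLongGap j g * centredLongGap k g ∂ν =
      ν.real ({g : ℕ → ℝ | 1 < g j} ∩ {g | 1 < g k}) - q ^ 2 := by
    simp_rw [hexp]
    rw [integral_add _ (integrable_const _), integral_sub, integral_sub, integral_const_mul,
      integral_const_mul, integral_indicator_one hmeas,
      integral_indicator_one (measurableSet_gap_gt j 1),
      integral_indicator_one (measurableSet_gap_gt k 1), hone, hone]
    · simp; ring
    · exact hint _ hmeas
    · exact (hint _ (measurableSet_gap_gt j 1)).const_mul q
    · exact (hint _ hmeas).sub ((hint _ (measurableSet_gap_gt j 1)).const_mul q)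
    · exact (hint _ (measurableSet_gap_gt k 1)).const_mul q
    · exact ((hint _ hmeas).sub ((hint _ (measurableSet_gap_gt j 1)).const_mul q)).sub
        ((hint _ (measurableSet_gap_gt k 1)).const_mul q)
  rw [hval]
  split_ifs with hjk
  · have : ν.real ({g : ℕ → ℝ | 1 < g j} ∩ {g | 1 < g k}) ≤ 1 := measureReal_le_one
    nlinarith [sq_nonneg q]
  · have h2 := hν.measureReal_gap_gt_one_of_subset {j, k}
    have hset : {g : ℕ → ℝ | ∀ i ∈ ({j, k} : Finset ℕ), 1 < g i} =
        {g : ℕ → ℝ | 1 < g j} ∩ {g | 1 < g k} := by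
      ext; simp
    rw [hset, Finset.card_pair hjk] at h2
    rw [h2, hq, ← Real.exp_nat_mul]
    norm_num

/-- The Poisson process makes at least `n` jumps before time `n / 6` with probability at most
`36 / n`. -/
lemma IsIIDExp.measureReal_sum_gap_le {ν : Measure (ℕ → ℝ)} (hν : IsIIDExp ν) {n : ℕ}
    (hn : 1 ≤ n) {t : ℝ} (ht : 6 * t ≤ n) :
    ν.real {g | ∑ k ∈ Finset.range n, g k ≤ t} ≤ 36 / n := by
  have := hν.1
  have hn' : (1 : ℝ) ≤ n := by exact_mod_cast hn
  let Z : (ℕ → ℝ) → ℝ := fun g => ∑ k ∈ Finset.range n, centredLongGap k g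
  have hZexp : ∀ g, Z g ^ 2 =
      ∑ j ∈ Finset.range n, ∑ k ∈ Finset.range n, centredLongGap j g * centredLongGap k g := by
    intro g
    rw [sq, Finset.sum_mul_sum]
  have hZint : Integrable (fun g => Z g ^ 2) ν := by
    simp_rw [hZexp]
    exact integrable_finsetSum _ fun j _ => integrable_finsetSum _ fun k _ =>
      integrable_mul_centredLongGap j k
  have hZ : ∫ g, Z g ^ 2 ∂ν ≤ n := by
    simp_rw [hZexp]
    rw [integral_finsetSum _ fun j _ => integrable_finsetSum _ fun k _ =>
      integrable_mul_centredLongGap j k]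
    have hj : ∀ j ∈ Finset.range n,
        ∫ g, ∑ k ∈ Finset.range n, centredLongGap j g * centredLongGap k g ∂ν ≤ 1 := by
      intro j hj
      rw [integral_finsetSum _ fun k _ => integrable_mul_centredLongGap j k]
      refine (Finset.sum_le_sum fun k _ => hν.integral_mul_centredLongGap j k).trans ?_
      simp [Finset.mem_range.1 hj]
    exact (Finset.sum_le_sum hj).trans (by simp)
  have hmarkov := mul_meas_ge_le_integral_of_nonneg (μ := ν) (f := fun g => Z g ^ 2)
    (ae_of_all _ fun g => sq_nonneg _) hZint ((n / 6 : ℝ) ^ 2)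
  have hsub : ν.real {g | ∑ k ∈ Finset.range n, g k ≤ t} ≤
      ν.real {g | (n / 6 : ℝ) ^ 2 ≤ Z g ^ 2} := by
    have hpos : ∀ᵐ g ∂ν, ∀ k, 0 < g k := by
      rw [ae_iff]
      simpa using hν.measure_gap_nonpos
    refine ENNReal.toReal_mono (measure_ne_top _ _) (measure_mono_ae ?_)
    filter_upwards [hpos] with g hg hgt
    have hle : Z g + n * Real.exp (-1) ≤ t := by
      refine le_trans (le_of_eq ?_) ((Finset.sum_le_sum (s := Finset.range n) (f := fun k =>
        Set.indicator {g : ℕ → ℝ | 1 < g k} (1 : (ℕ → ℝ) → ℝ) g) (g := g) fun k _ => ?_).trans hgt)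
      · simp [Z, centredLongGap, Finset.sum_sub_distrib]
      · by_cases h : g ∈ {g : ℕ → ℝ | 1 < g k}
        · simpa [Set.indicator_of_mem h] using le_of_lt h
        · simpa [Set.indicator_of_notMem h] using (hg k).le
    have hexp : (1 : ℝ) / 3 ≤ Real.exp (-1) := by
      rw [Real.exp_neg, one_div]
      exact inv_anti₀ (Real.exp_pos _) (by linarith [Real.exp_one_lt_d9])
    have hneg : Z g ≤ -(n / 6) := by nlinarith
    change (n / 6 : ℝ) ^ 2 ≤ Z g ^ 2
    nlinarith
  rw [le_div_iff₀ (by linarith)]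
  have h1 := (mul_le_mul_of_nonneg_left hsub (sq_nonneg (n / 6 : ℝ))).trans (hmarkov.trans hZ)
  have h2 : (0 : ℝ) < n := by linarith
  nlinarith

lemma IsIIDExp.measure_sum_gap_bounded {ν : Measure (ℕ → ℝ)} (hν : IsIIDExp ν) :
    ν {g | ∃ t : ℝ, ∀ n, ∑ k ∈ Finset.range n, g k ≤ t} = 0 := by
  have := hν.1
  have hU : {g : ℕ → ℝ | ∃ t : ℝ, ∀ n, ∑ k ∈ Finset.range n, g k ≤ t} =
      ⋃ T : ℕ, {g | ∀ n, ∑ k ∈ Finset.range n, g k ≤ (T : ℝ)} := by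
    ext g
    simp only [Set.mem_ofPred_eq, Set.mem_iUnion]
    constructor
    · rintro ⟨t, ht⟩
      obtain ⟨T, hT⟩ := exists_nat_ge t
      exact ⟨T, fun n => (ht n).trans hT⟩
    · rintro ⟨T, hT⟩
      exact ⟨T, hT⟩
  rw [hU, measure_iUnion_null_iff]
  intro T
  rw [← measureReal_eq_zero_iff]
  refine le_antisymm (le_of_forall_pos_le_add fun e he => ?_) measureReal_nonneg
  obtain ⟨n, hn⟩ := exists_nat_ge (36 / e + 6 * T + 1)
  have hT : (0 : ℝ) ≤ T := T.cast_nonneg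
  have he' : 0 < 36 / e := by positivity
  have h1 : (1 : ℝ) ≤ n := by linarith
  have h := hν.measureReal_sum_gap_le (n := n) (by exact_mod_cast h1) (t := T) (by linarith)
  have h2 : (36 : ℝ) / n ≤ e := by
    rw [div_le_comm₀ (by linarith) he]
    linarith
  have h3 : ν.real {g : ℕ → ℝ | ∀ n, ∑ k ∈ Finset.range n, g k ≤ T} ≤
      ν.real {g | ∑ k ∈ Finset.range n, g k ≤ (T : ℝ)} := measureReal_mono fun g hg => hg n
  linarith

lemma nJumps_sum {g : ℕ → ℝ} (hg : ∀ k, 0 < g k) (n : ℕ) :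
    nJumps g (∑ k ∈ Finset.range n, g k) = n := by
  have hmono : StrictMono fun n => ∑ k ∈ Finset.range n, g k :=
    strictMono_nat_of_lt_succ fun n => by simp [Finset.sum_range_succ, hg n]
  have : {m | ∑ k ∈ Finset.range m, g k ≤ ∑ k ∈ Finset.range n, g k} = Set.Iic n := by
    ext m
    exact hmono.le_iff_le
  rw [nJumps, this, csSup_Iic]

lemma sum_nJumps_le {g : ℕ → ℝ} (hg : ∀ t : ℝ, ∃ n, t < ∑ k ∈ Finset.range n, g k)
    (hg0 : ∀ k, 0 < g k) {t : ℝ} (ht : 0 ≤ t) :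
    ∑ k ∈ Finset.range (nJumps g t), g k ≤ t := by
  have hmono : StrictMono fun n => ∑ k ∈ Finset.range n, g k :=
    strictMono_nat_of_lt_succ fun n => by simp [Finset.sum_range_succ, hg0 n]
  refine Nat.sSup_mem (s := {n | ∑ k ∈ Finset.range n, g k ≤ t}) ⟨0, by simpa using ht⟩ ?_
  obtain ⟨n, hn⟩ := hg t
  refine ⟨n, fun m hm => (hmono.lt_iff_lt.1 (lt_of_le_of_lt hm hn)).le⟩

/-- The paths for which the jump times increase to infinity. -/
def goodGaps : Set (ℕ → ℝ) :=
  {g | (∀ k, 0 < g k) ∧ ∀ t : ℝ, ∃ n, t < ∑ k ∈ Finset.range n, g k}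

lemma IsIIDExp.measure_compl_goodGaps {ν : Measure (ℕ → ℝ)} (hν : IsIIDExp ν) :
    ν goodGapsᶜ = 0 := by
  refine measure_mono_null (fun g hg => ?_)
    (measure_union_null hν.measure_gap_nonpos hν.measure_sum_gap_bounded)
  by_contra h
  simp only [Set.mem_union, Set.mem_ofPred_eq, not_or, not_exists, not_le, not_forall] at h
  exact hg h

/-- The discrete walk enters `V` for the first time at a jump whose time is at most `hitT`. -/
lemma exists_first_hit {d N : ℕ} {V : Set (Torus d N)} {ω : CTPath d N} (hg : ω.2 ∈ goodGaps)
    (hV : ∃ k, ω.1 k ∈ V) :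
    ∃ k, ω.1 k ∈ V ∧ (∀ j < k, ω.1 j ∉ V) ∧ ∑ i ∈ Finset.range k, ω.2 i ≤ hitT V ω := by
  refine ⟨Nat.find hV, Nat.find_spec hV, fun j hj => Nat.find_min hV hj, ?_⟩
  have hmono : Monotone fun n => ∑ k ∈ Finset.range n, ω.2 k :=
    monotone_nat_of_le_succ fun n => by simp [Finset.sum_range_succ, (hg.1 n).le]
  refine le_csInf ⟨∑ i ∈ Finset.range (Nat.find hV), ω.2 i,
    Finset.sum_nonneg fun i _ => (hg.1 i).le, ?_⟩ ?_
  · rw [ctPos, nJumps_sum hg.1]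
    exact Nat.find_spec hV
  · rintro t ⟨ht, htV⟩
    exact (hmono (Nat.find_min' hV htV)).trans (sum_nJumps_le hg.2 hg.1 ht)

lemma exitT_le_sum {d N : ℕ} {V : Set (Torus d N)} {ω : CTPath d N} (hg : ∀ k, 0 < ω.2 k)
    {k : ℕ} (hk : ω.1 k ∉ V) :
    exitT V ω ≤ ∑ i ∈ Finset.range k, ω.2 i := by
  refine csInf_le ⟨0, fun t ht => ht.1⟩ ⟨Finset.sum_nonneg fun i _ => (hg i).le, ?_⟩
  rwa [ctPos, nJumps_sum hg]

lemma measure_prod_le_of_forall {α β : Type*} [MeasurableSpace α] [MeasurableSpace β]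
    {μ : Measure α} {ν : Measure β} [IsProbabilityMeasure μ] [IsProbabilityMeasure ν]
    {E : Set (α × β)} {E₁ Z₁ : Set α} {E₂ Z₂ : Set β} (hZ₁ : μ Z₁ = 0) (hZ₂ : ν Z₂ = 0)
    (hE : ∀ ω ∈ E, ω.1 ∉ Z₁ → ω.2 ∉ Z₂ → ω.1 ∈ E₁ ∨ ω.2 ∈ E₂) :
    (μ.prod ν E).toReal ≤ μ.real E₁ + ν.real E₂ := by
  have hfst : ∀ s : Set α, μ.prod ν (s ×ˢ Set.univ) = μ s := fun s => by simp
  have hsnd : ∀ s : Set β, μ.prod ν (Set.univ ×ˢ s) = ν s := fun s => by simp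
  have hsub : E ⊆ (E₁ ∪ Z₁) ×ˢ Set.univ ∪ Set.univ ×ˢ (E₂ ∪ Z₂) := by
    intro ω hω
    by_contra h
    simp only [Set.mem_union, Set.mem_prod, Set.mem_univ, and_true, true_and, not_or] at h
    exact (hE ω hω h.1.2 h.2.2).elim h.1.1 h.2.1
  have h1 : μ (E₁ ∪ Z₁) ≤ μ E₁ := (measure_union_le _ _).trans (by simp [hZ₁])
  have h2 : ν (E₂ ∪ Z₂) ≤ ν E₂ := (measure_union_le _ _).trans (by simp [hZ₂])
  rw [Measure.real, Measure.real, ← ENNReal.toReal_add (measure_ne_top _ _) (measure_ne_top _ _)]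
  refine ENNReal.toReal_mono (by finiteness) ?_
  refine (measure_mono hsub).trans ((measure_union_le _ _).trans ?_)
  rw [hfst, hsnd]
  exact add_le_add h1 h2

/-- Hitting `V` before time `t` forces the discrete walk to hit `V` within `n` steps, unless the
Poisson process jumps unusually often. -/
lemma measure_hitT_le {d N : ℕ} [NeZero N] (hd : 1 ≤ d) (hN : 3 ≤ N) {x : Torus d N}
    {P : Measure (CTPath d N)} (hP : IsCTWalk P (pointInit x)) {V : Set (Torus d N)}
    (hV : 0 ∈ V) {n : ℕ} (hn : 1 ≤ n) {t p : ℝ} (ht : 6 * t ≤ n)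
    (hp : ∀ μ : Measure (ℕ → Torus d N), IsWalkLaw μ (pointInit x) →
      μ.real {ω | ∃ k < n, (∀ j < k, ω j ∈ Vᶜ) ∧ ω k ∈ V} ≤ p) :
    (P {ω | hitT V ω ≤ t}).toReal ≤ p + 36 / n := by
  obtain ⟨μ, ν, hμ, hν, rfl⟩ := hP
  have := hμ.1
  have := hν.1
  refine (measure_prod_le_of_forall (measure_never_zero hd hN hμ)
    hν.measure_compl_goodGaps ?_).trans
    (add_le_add (hp μ hμ) (hν.measureReal_sum_gap_le hn ht))
  intro ω hω h1 h2
  simp only [Set.mem_ofPred_eq, not_forall, not_not, Set.notMem_compl_iff] at h1 h2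
  obtain ⟨k₀, hk₀⟩ := h1
  obtain ⟨k, hk, hk', hkt⟩ := exists_first_hit h2 ⟨k₀, hk₀ ▸ hV⟩
  by_cases hkn : k < n
  · exact Or.inl ⟨k, hkn, hk', hk⟩
  · refine Or.inr (le_trans ?_ (hkt.trans hω))
    exact Finset.sum_le_sum_of_subset_of_nonneg (Finset.range_subset_range.2 (not_lt.1 hkn))
      fun i _ _ => (h2.1 i).le

lemma measure_hitT_le_exitT {d N : ℕ} [NeZero N] (hd : 1 ≤ d) (hN : 3 ≤ N) {x : Torus d N}
    {P : Measure (CTPath d N)} (hP : IsCTWalk P (pointInit x)) {A C : Set (Torus d N)}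
    (hA : 0 ∈ A) {p : ℝ}
    (hp : ∀ μ : Measure (ℕ → Torus d N), IsWalkLaw μ (pointInit x) →
      μ.real {ω | ∃ k, (∀ j < k, ω j ∈ C \ A) ∧ ω k ∈ A} ≤ p) :
    (P {ω | hitT A ω ≤ exitT C ω}).toReal ≤ p := by
  obtain ⟨μ, ν, hμ, hν, rfl⟩ := hP
  have := hμ.1
  have := hν.1
  refine (measure_prod_le_of_forall (E₂ := ∅) (measure_never_zero hd hN hμ)
    hν.measure_compl_goodGaps ?_).trans (by simpa using hp μ hμ)
  intro ω hω h1 h2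
  simp only [Set.mem_ofPred_eq, not_forall, not_not, Set.notMem_compl_iff] at h1 h2
  obtain ⟨k₀, hk₀⟩ := h1
  obtain ⟨k, hk, hk', hkt⟩ := exists_first_hit h2 ⟨k₀, hk₀ ▸ hA⟩
  refine Or.inl ⟨k, fun j hj => ⟨?_, hk' j hj⟩, hk⟩
  by_contra hC
  have hlt : ∑ i ∈ Finset.range j, ω.2 i < ∑ i ∈ Finset.range k, ω.2 i :=
    (strictMono_nat_of_lt_succ (f := fun n => ∑ i ∈ Finset.range n, ω.2 i) fun n => by
      simp [Finset.sum_range_succ, h2.1 n]) hj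
  exact absurd (hkt.trans (hω.trans (exitT_le_sum h2.1 hC))) (not_le.2 hlt)

/-! ### A periodic substitute for the square of the distance -/

/-- The cosine of the angle corresponding to `z ∈ ℤ/Nℤ`. -/
def zcos {N : ℕ} (z : ZMod N) : ℝ := Real.cos (2 * Real.pi / N * z.val)

/-- The sine of the angle corresponding to `z ∈ ℤ/Nℤ`. -/
def zsin {N : ℕ} (z : ZMod N) : ℝ := Real.sin (2 * Real.pi / N * z.val)

lemma zcos_sq_add_zsin_sq {N : ℕ} (z : ZMod N) : zcos z ^ 2 + zsin z ^ 2 = 1 :=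
  Real.cos_sq_add_sin_sq _

lemma angle_val_add_one {N : ℕ} (hN : 2 ≤ N) (z : ZMod N) :
    ∃ k : ℤ, 2 * Real.pi / N * (z + 1).val =
      2 * Real.pi / N * z.val + 2 * Real.pi / N - k * (2 * Real.pi) := by
  have : NeZero N := ⟨by omega⟩
  have : Fact (1 < N) := ⟨hN⟩
  have hN0 : (N : ℝ) ≠ 0 := by exact_mod_cast NeZero.ne N
  refine ⟨((z.val + 1) / N : ℕ), ?_⟩
  have h : ((z + 1).val : ℝ) = z.val + 1 - N * ((z.val + 1) / N : ℕ) := by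
    rw [ZMod.val_add, ZMod.val_one, eq_sub_iff_add_eq]
    exact_mod_cast Nat.mod_add_div (z.val + 1) N
  rw [h, Int.cast_natCast]
  field_simp

lemma zcos_add_one {N : ℕ} (hN : 2 ≤ N) (z : ZMod N) :
    zcos (z + 1) = zcos z * Real.cos (2 * Real.pi / N) - zsin z * Real.sin (2 * Real.pi / N) := by
  obtain ⟨k, hk⟩ := angle_val_add_one hN z
  rw [zcos, hk, Real.cos_sub_int_mul_two_pi, Real.cos_add, zcos, zsin]

lemma zsin_add_one {N : ℕ} (hN : 2 ≤ N) (z : ZMod N) :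
    zsin (z + 1) = zsin z * Real.cos (2 * Real.pi / N) + zcos z * Real.sin (2 * Real.pi / N) := by
  obtain ⟨k, hk⟩ := angle_val_add_one hN z
  rw [zsin, hk, Real.sin_sub_int_mul_two_pi, Real.sin_add, zcos, zsin]

lemma zcos_sub_one {N : ℕ} (hN : 2 ≤ N) (z : ZMod N) :
    zcos (z - 1) = zcos z * Real.cos (2 * Real.pi / N) + zsin z * Real.sin (2 * Real.pi / N) := by
  have h1 := zcos_add_one hN (z - 1)
  have h2 := zsin_add_one hN (z - 1)
  rw [sub_add_cancel] at h1 h2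
  rw [h1, h2]
  linear_combination (-zcos (z - 1)) * Real.cos_sq_add_sin_sq (2 * Real.pi / N)

/-- The distance to `0` in `ℤ/Nℤ`. -/
def zdist {N : ℕ} (z : ZMod N) : ℕ := min (0 - z).val (z - 0).val

lemma zcos_eq_cos_zdist {N : ℕ} [NeZero N] (z : ZMod N) :
    zcos z = Real.cos (2 * Real.pi / N * zdist z) := by
  have hN0 : (N : ℝ) ≠ 0 := by exact_mod_cast NeZero.ne N
  rw [zdist, zero_sub, sub_zero]
  rcases min_choice (-z).val z.val with h | h <;> rw [h]
  · rw [ZMod.neg_val]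
    split_ifs with hz
    · simp [zcos, hz]
    · rw [Nat.cast_sub (ZMod.val_lt z).le, mul_sub, div_mul_cancel₀ _ hN0, Real.cos_two_pi_sub,
        zcos]
  · rfl

lemma two_mul_zdist_le {N : ℕ} [NeZero N] (z : ZMod N) : 2 * zdist z ≤ N := by
  have h := ZMod.neg_val z
  have := ZMod.val_lt z
  rw [zdist, zero_sub, sub_zero]
  split_ifs at h with hz
  · simp [hz]
  · omega

/-- A smooth periodic function comparable to the square of the distance to `0` in `ℤ/Nℤ`. -/
def zsq {N : ℕ} (z : ZMod N) : ℝ := (2 - 2 * zcos z) / (2 * Real.pi / N) ^ 2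

lemma zsq_nonneg {N : ℕ} (z : ZMod N) : 0 ≤ zsq z :=
  div_nonneg (by linarith [Real.cos_le_one (2 * Real.pi / N * z.val), zcos.eq_1 z]) (sq_nonneg _)

lemma zsq_le {N : ℕ} [NeZero N] (z : ZMod N) : zsq z ≤ (zdist z : ℝ) ^ 2 := by
  have hN0 : (0 : ℝ) < N := by exact_mod_cast NeZero.pos N
  have hθ : 0 < 2 * Real.pi / N := by positivity
  rw [zsq, div_le_iff₀ (by positivity), zcos_eq_cos_zdist]
  nlinarith [Real.one_sub_sq_div_two_le_cos (x := 2 * Real.pi / N * zdist z)]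

lemma le_zsq {N : ℕ} [NeZero N] (z : ZMod N) : (zdist z : ℝ) ^ 2 / 4 ≤ zsq z := by
  have hN0 : (0 : ℝ) < N := by exact_mod_cast NeZero.pos N
  have hθ : 0 < 2 * Real.pi / N := by positivity
  have hz : (2 : ℝ) * zdist z ≤ N := by exact_mod_cast two_mul_zdist_le z
  have habs : |2 * Real.pi / N * zdist z| ≤ Real.pi := by
    rw [abs_of_nonneg (by positivity), div_mul_eq_mul_div, div_le_iff₀ hN0]
    nlinarith [Real.pi_pos]
  rw [zsq, le_div_iff₀ (by positivity), zcos_eq_cos_zdist]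
  have h := Real.cos_le_one_sub_mul_cos_sq habs
  have hpi : (1 : ℝ) / 8 ≤ 2 / Real.pi ^ 2 := by
    rw [div_le_div_iff₀ (by norm_num) (by positivity)]
    nlinarith [Real.pi_pos, Real.pi_lt_four]
  nlinarith [mul_le_mul_of_nonneg_right hpi (sq_nonneg (2 * Real.pi / N * zdist z))]

lemma torusDist_zero_le_iff {d N : ℕ} (y : Torus d N) (n : ℕ) :
    torusDist 0 y ≤ n ↔ ∀ i, zdist (y i) ≤ n := by
  simp [torusDist, zdist, Finset.sup_le_iff]

lemma zdist_le_torusDist {d N : ℕ} (y : Torus d N) (i : Fin d) :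
    zdist (y i) ≤ torusDist 0 y :=
  (torusDist_zero_le_iff y _).1 le_rfl i

/-- A smooth periodic function comparable to one plus the square of the distance to `0`. -/
def tsq {d N : ℕ} (y : Torus d N) : ℝ := ∑ i, zsq (y i) + 10000

lemma le_tsq {d N : ℕ} (y : Torus d N) : 10000 ≤ tsq y := by
  have : 0 ≤ ∑ i, zsq (y i) := Finset.sum_nonneg fun i _ => zsq_nonneg _
  rw [tsq]; linarith

lemma zsq_add_le_tsq {d N : ℕ} (y : Torus d N) (i : Fin d) : zsq (y i) + 10000 ≤ tsq y := by
  have := Finset.single_le_sum (f := fun i => zsq (y i)) (fun i _ => zsq_nonneg _)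
    (Finset.mem_univ i)
  rw [tsq]; linarith

lemma tsq_le_of_mem_torusBall {d N : ℕ} [NeZero N] {y : Torus d N} {R : ℝ} (hR : 1 ≤ R)
    (hy : y ∈ torusBall 0 R) : tsq y ≤ (d + 10000) * R ^ 2 := by
  have h : ∀ i ∈ Finset.univ, zsq (y i) ≤ R ^ 2 := fun i _ => by
    have h1 : (zdist (y i) : ℝ) ≤ R :=
      le_trans (by exact_mod_cast zdist_le_torusDist y i) hy
    exact (zsq_le _).trans (pow_le_pow_left₀ (Nat.cast_nonneg _) h1 2)
  have h2 := Finset.sum_le_sum h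
  simp only [Finset.sum_const, Finset.card_univ, Fintype.card_fin, nsmul_eq_mul] at h2
  rw [tsq]
  nlinarith

lemma le_tsq_of_notMem_torusBall {d N : ℕ} [NeZero N] {y : Torus d N} {r : ℝ} (hr : 0 ≤ r)
    (hy : y ∉ torusBall 0 r) : r ^ 2 / 4 ≤ tsq y := by
  have hlt : r < torusDist 0 y := not_le.1 hy
  obtain ⟨i, hi⟩ : ∃ i, r < zdist (y i) := by
    by_contra! h
    have : torusDist 0 y ≤ ⌊r⌋₊ := (torusDist_zero_le_iff y _).2 fun i => Nat.le_floor (h i)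
    exact absurd ((Nat.cast_le.2 this).trans (Nat.floor_le hr)) (not_le.2 hlt)
  have h1 := le_zsq (y i)
  have h2 := zsq_add_le_tsq y i
  nlinarith

/-- The second moment bound for the increments of `zsq`. -/
lemma zsq_increments {N : ℕ} (hN : 2 ≤ N) (z : ZMod N) :
    ∃ κ : ℝ, 0 ≤ κ ∧ κ ≤ 1 ∧ κ = (2 - 2 * Real.cos (2 * Real.pi / N)) / (2 * Real.pi / N) ^ 2 ∧
      (zsq (z + 1) - zsq z) + (zsq (z - 1) - zsq z) =
        2 * κ - κ * ((2 * Real.pi / N) ^ 2 * zsq z) ∧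
      (zsq (z + 1) - zsq z) ^ 2 + (zsq (z - 1) - zsq z) ^ 2 ≤ 2 * κ ^ 2 + 8 * κ * zsq z := by
  have hN0 : (0 : ℝ) < N := by exact_mod_cast (by omega : 0 < N)
  have hθ : 0 < 2 * Real.pi / N := by positivity
  have hc1 := Real.cos_le_one (2 * Real.pi / N)
  have hlow := Real.one_sub_sq_div_two_le_cos (x := 2 * Real.pi / N)
  have hcs := Real.cos_sq_add_sin_sq (2 * Real.pi / N)
  have hcs' := zcos_sq_add_zsin_sq z
  have hcz : zcos z ≤ 1 := Real.cos_le_one _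
  rw [zsq, zsq, zsq, zcos_add_one hN, zcos_sub_one hN]
  set θ := 2 * Real.pi / N
  set c₁ := Real.cos θ
  set s₁ := Real.sin θ
  set c := zcos z
  set s := zsin z
  have hθ2 : 0 < θ ^ 2 := by positivity
  refine ⟨_, div_nonneg (by linarith) hθ2.le, ?_, rfl, ?_, ?_⟩
  · rw [div_le_one hθ2]; linarith
  · field_simp
    ring
  · have hs1 : s₁ ^ 2 ≤ 2 * (1 - c₁) := by nlinarith
    have hs : s ^ 2 ≤ 2 * (1 - c) := by nlinarith
    have hc2 : c ^ 2 ≤ 1 := by nlinarith [sq_nonneg s]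
    have hss : s ^ 2 * s₁ ^ 2 ≤ (2 * (1 - c)) * (2 * (1 - c₁)) :=
      mul_le_mul hs hs1 (sq_nonneg _) (by linarith)
    have hcc : c ^ 2 * (1 - c₁) ^ 2 ≤ (1 - c₁) ^ 2 :=
      mul_le_of_le_one_left (sq_nonneg _) hc2
    have key : 8 * (c ^ 2 * (1 - c₁) ^ 2 + s ^ 2 * s₁ ^ 2) ≤
        2 * (2 - 2 * c₁) ^ 2 + 8 * (2 - 2 * c₁) * (2 - 2 * c) := by nlinarith
    have e1 : ((2 - 2 * (c * c₁ - s * s₁)) / θ ^ 2 - (2 - 2 * c) / θ ^ 2) ^ 2 +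
        ((2 - 2 * (c * c₁ + s * s₁)) / θ ^ 2 - (2 - 2 * c) / θ ^ 2) ^ 2 =
        8 * (c ^ 2 * (1 - c₁) ^ 2 + s ^ 2 * s₁ ^ 2) / (θ ^ 2) ^ 2 := by
      field_simp
      ring
    have e2 : 2 * ((2 - 2 * c₁) / θ ^ 2) ^ 2 + 8 * ((2 - 2 * c₁) / θ ^ 2) * ((2 - 2 * c) / θ ^ 2) =
        (2 * (2 - 2 * c₁) ^ 2 + 8 * (2 - 2 * c₁) * (2 - 2 * c)) / (θ ^ 2) ^ 2 := by
      field_simp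
    rw [e1, e2]
    gcongr

lemma sum_comp_add_single {d N : ℕ} (φ : ZMod N → ℝ) (y : Torus d N) (i : Fin d) (a : ZMod N) :
    ∑ j, φ ((y + Pi.single i a : Torus d N) j) = ∑ j, φ (y j) + (φ (y i + a) - φ (y i)) := by
  rw [← Finset.add_sum_erase _ _ (Finset.mem_univ i),
    ← Finset.add_sum_erase _ (fun j => φ (y j)) (Finset.mem_univ i)]
  have : ∀ j ∈ Finset.univ.erase i, φ ((y + Pi.single i a : Torus d N) j) = φ (y j) := by
    intro j hj
    simp [Finset.ne_of_mem_erase hj]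
  rw [Finset.sum_congr rfl this]
  simp only [Pi.add_apply, Pi.single_eq_same]
  ring

lemma tsq_add_single {d N : ℕ} (y : Torus d N) (i : Fin d) :
    tsq (y + Pi.single i 1) = tsq y + (zsq (y i + 1) - zsq (y i)) := by
  rw [tsq, tsq, sum_comp_add_single]; ring

lemma tsq_sub_single {d N : ℕ} (y : Torus d N) (i : Fin d) :
    tsq (y - Pi.single i 1) = tsq y + (zsq (y i - 1) - zsq (y i)) := by
  rw [sub_eq_add_neg, ← Pi.single_neg, tsq, tsq, sum_comp_add_single, ← sub_eq_add_neg]; ring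

lemma tsq_le_of_mem_union_extBdry {d N : ℕ} (hN : 2 ≤ N) {y : Torus d N} {R : ℝ}
    (hR : 1 ≤ R) (hy : y ∈ torusBall 0 R ∪ extBdry adj (torusBall 0 R)) :
    tsq y ≤ 3 * (d + 10000) * R ^ 2 := by
  have : NeZero N := ⟨by omega⟩
  have hR2 : 0 ≤ (d + 10000) * R ^ 2 := by positivity
  rcases hy with hy | ⟨-, x, hx, hxy⟩
  · linarith [tsq_le_of_mem_torusBall hR hy]
  · have hux := tsq_le_of_mem_torusBall hR hx
    obtain ⟨i, h⟩ := (adj_iff_exists_single hN x y).1 hxy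
    obtain ⟨κ, hκ0, hκ1, -, -, hsq⟩ := zsq_increments hN (x i)
    have h0 := zsq_nonneg (x i)
    have hle := zsq_add_le_tsq x i
    have hκ2 : κ ^ 2 ≤ 1 := pow_le_one₀ hκ0 hκ1
    have hκz : κ * zsq (x i) ≤ zsq (x i) := mul_le_of_le_one_left h0 hκ1
    have hb : ∀ h : ℝ, h ^ 2 ≤ 2 * κ ^ 2 + 8 * κ * zsq (x i) → h ≤ zsq (x i) + 4 := fun h hh =>
      le_of_sq_le_sq (by nlinarith) (by linarith)
    rcases h with rfl | rfl
    · rw [tsq_add_single]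
      have := hb _ (le_trans (le_add_of_nonneg_right (sq_nonneg _)) hsq)
      linarith
    · rw [tsq_sub_single]
      have := hb _ (le_trans (le_add_of_nonneg_left (sq_nonneg _)) hsq)
      linarith

/-! ### An almost superharmonic function -/

lemma one_add_rpow_le {t : ℝ} (ht : |t| ≤ 1 / 50) :
    (1 + t) ^ (-(1 / 4) : ℝ) ≤ 1 - t / 4 + 11 / 64 * t ^ 2 := by
  obtain ⟨h1, h2⟩ := abs_le.1 ht
  have hpos : 0 < 1 + t := by linarith
  have hq : 0 < 1 - t / 4 + 11 / 64 * t ^ 2 := by nlinarith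
  have hpoly : 1 ≤ (1 + t) * (1 - t / 4 + 11 / 64 * t ^ 2) ^ 4 := by
    have horner : ∀ a b : ℝ, |a| ≤ 1 / 2 → |b| ≤ 1 → |a + t * b| ≤ 1 := fun a b ha hb => by
      refine (abs_add_le _ _).trans ?_
      rw [abs_mul]
      nlinarith [abs_nonneg t, abs_nonneg b]
    obtain ⟨s, hs, hs1⟩ : ∃ s : ℝ, (1 + t) * (1 - t / 4 + 11 / 64 * t ^ 2) ^ 4 =
        1 + t ^ 2 * (1 / 16 + t * s) ∧ |s| ≤ 1 := by
      refine ⟨31 / 64 + t * (-549 / 2048 + t * (863 / 4096 + t * (-4455 / 65536 +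
        t * (6897 / 262144 + t * (-70543 / 16777216 + t * (14641 / 16777216)))))), by ring, ?_⟩
      iterate 6 refine horner _ _ (by norm_num [abs_le]) ?_
      norm_num [abs_le]
    have hts : |t * s| ≤ 1 / 50 := by
      rw [abs_mul]
      nlinarith [abs_nonneg t, abs_nonneg s]
    rw [hs]
    nlinarith [sq_nonneg t, (abs_le.1 hts).1]
  refine le_of_pow_le_pow_left₀ (n := 4) (by norm_num) hq.le ?_
  rw [← Real.rpow_natCast, ← Real.rpow_mul hpos.le]
  norm_num
  rw [Real.rpow_neg_one, inv_le_iff_one_le_mul₀' hpos]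
  exact hpoly

lemma rpow_taylor_le {u h : ℝ} (hu : 0 < u) (hh : |h| ≤ u / 50) :
    (u + h) ^ (-(1 / 4) : ℝ) ≤
      u ^ (-(1 / 4) : ℝ) * (1 - h / (4 * u) + 11 / 64 * (h ^ 2 / u ^ 2)) := by
  have ht : |h / u| ≤ 1 / 50 := by
    rw [abs_div, abs_of_pos hu, div_le_iff₀ hu]
    linarith
  have hpos : 0 ≤ 1 + h / u := by linarith [(abs_le.1 ht).1]
  have he : u + h = u * (1 + h / u) := by field_simp
  rw [he, Real.mul_rpow hu.le hpos]
  refine mul_le_mul_of_nonneg_left ((one_add_rpow_le ht).trans_eq ?_) (Real.rpow_nonneg hu.le _)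
  field_simp

/-- A bounded positive function, comparable to `(1 + |y|)^{-1/2}`, which is superharmonic up to an
error that is small far from the origin. -/
def tpot {d N : ℕ} (y : Torus d N) : ℝ := tsq y ^ (-(1 / 4) : ℝ)

lemma tpot_pos {d N : ℕ} (y : Torus d N) : 0 < tpot y :=
  Real.rpow_pos_of_pos (by linarith [le_tsq y]) _

lemma nbrAvg_tpot_le {d N : ℕ} (hd : 3 ≤ d) (hN : 2 ≤ N) (y : Torus d N) :
    nbrAvg tpot y ≤ tpot y +
      49 * ((N : ℝ) ^ (-2 : ℝ) * (N : ℝ) ^ (-(1 / 2) : ℝ)) / (2 * d) := by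
  have hd' : (3 : ℝ) ≤ d := by exact_mod_cast hd
  have hN0 : (0 : ℝ) < N := by exact_mod_cast (by omega : 0 < N)
  have hu := le_tsq y
  set u := tsq y with hu_def
  have hu0 : 0 < u := by linarith
  set θ := 2 * Real.pi / N with hθ_def
  have hθ : 0 < θ := by positivity
  set w := u ^ (-(1 / 4) : ℝ) with hw_def
  have hw : 0 < w := Real.rpow_pos_of_pos hu0 _
  choose κ' hκ0' hκ1' hκe hκs hκq using fun i => zsq_increments hN (y i)
  have hκconst : ∀ i, κ' i = (2 - 2 * Real.cos θ) / θ ^ 2 := hκe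
  obtain ⟨κ, hκ_def⟩ : ∃ κ, κ = (2 - 2 * Real.cos θ) / θ ^ 2 := ⟨_, rfl⟩
  simp only [hκconst, ← hκ_def] at hκ0' hκ1' hκs hκq
  have i₀ : Fin d := ⟨0, by omega⟩
  have hκ0 := hκ0' i₀
  have hκ1 := hκ1' i₀
  have hκ2 : κ ^ 2 ≤ 1 := pow_le_one₀ hκ0 hκ1
  have hincr : ∀ i, ∀ h : ℝ, h ^ 2 ≤ 2 * κ ^ 2 + 8 * κ * zsq (y i) → |h| ≤ u / 50 := by
    intro i h hh
    have h0 := zsq_nonneg (y i)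
    have hle := zsq_add_le_tsq y i
    rw [← hu_def] at hle
    have hκz : κ * zsq (y i) ≤ zsq (y i) := mul_le_of_le_one_left h0 hκ1
    refine abs_le_of_sq_le_sq ?_ (by linarith)
    nlinarith
  have hterm : ∀ i ∈ Finset.univ, tpot (y + Pi.single i 1) + tpot (y - Pi.single i 1) ≤
      w * (2 - (2 * κ - κ * (θ ^ 2 * zsq (y i))) / (4 * u) +
        11 / 64 * ((2 * κ ^ 2 + 8 * κ * zsq (y i)) / u ^ 2)) := by
    intro i _
    rw [tpot, tpot, tsq_add_single, tsq_sub_single, ← hκs i]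
    have ha := rpow_taylor_le hu0 (hincr i (zsq (y i + 1) - zsq (y i))
      (le_trans (le_add_of_nonneg_right (sq_nonneg _)) (hκq i)))
    have hb := rpow_taylor_le hu0 (hincr i (zsq (y i - 1) - zsq (y i))
      (le_trans (le_add_of_nonneg_left (sq_nonneg _)) (hκq i)))
    have hc : ((zsq (y i + 1) - zsq (y i)) ^ 2 + (zsq (y i - 1) - zsq (y i)) ^ 2) / u ^ 2 ≤
        (2 * κ ^ 2 + 8 * κ * zsq (y i)) / u ^ 2 := by
      exact div_le_div_of_nonneg_right (hκq i) (by positivity)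
    rw [← hu_def, ← hw_def] at *
    refine (add_le_add ha hb).trans ?_
    rw [← mul_add]
    refine mul_le_mul_of_nonneg_left ?_ hw.le
    rw [add_div] at hc
    rw [add_div _ _ (4 * u)]
    linarith
  have hsum := Finset.sum_le_sum hterm
  obtain ⟨p, hp_def⟩ : ∃ p, p = ∑ i, zsq (y i) := ⟨_, rfl⟩
  have hup : u = p + 10000 := by rw [hp_def, hu_def, tsq]
  have hp0 : 0 ≤ p := by rw [hp_def]; exact Finset.sum_nonneg fun i _ => zsq_nonneg _
  have hrhs : ∑ i, w * (2 - (2 * κ - κ * (θ ^ 2 * zsq (y i))) / (4 * u) +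
        11 / 64 * ((2 * κ ^ 2 + 8 * κ * zsq (y i)) / u ^ 2)) =
      w * (2 * d) + w / u * κ * (-d / 2 + θ ^ 2 * p / 4 + 11 / 32 * κ * d / u +
        11 / 8 * (p / u)) := by
    have haff : ∀ i, w * (2 - (2 * κ - κ * (θ ^ 2 * zsq (y i))) / (4 * u) +
        11 / 64 * ((2 * κ ^ 2 + 8 * κ * zsq (y i)) / u ^ 2)) =
        w * (2 - κ / (2 * u) + 11 / 32 * κ ^ 2 / u ^ 2) +
          w * (κ * θ ^ 2 / (4 * u) + 11 / 8 * κ / u ^ 2) * zsq (y i) := fun i => by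
      field_simp
      ring
    rw [Finset.sum_congr rfl fun i _ => haff i, Finset.sum_add_distrib, ← Finset.mul_sum,
      ← Finset.mul_sum, ← hp_def]
    simp only [Finset.sum_const, Finset.card_univ, Fintype.card_fin, nsmul_eq_mul]
    field_simp
    ring
  rw [hrhs] at hsum
  have hpu : p / u ≤ 1 := by rw [div_le_one hu0]; linarith
  have hκu : κ * d / u ≤ d / 10000 := by
    rw [div_le_div_iff₀ hu0 (by norm_num)]
    have : κ * d ≤ d := mul_le_of_le_one_left (by linarith) hκ1
    nlinarith
  have herr : w / u * κ * (-d / 2 + θ ^ 2 * p / 4 + 11 / 32 * κ * d / u + 11 / 8 * (p / u)) ≤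
      49 * ((N : ℝ) ^ (-2 : ℝ) * (N : ℝ) ^ (-(1 / 2) : ℝ)) := by
    have hrest : -d / 2 + 11 / 32 * κ * d / u + 11 / 8 * (p / u) ≤ -(1 / 16) := by
      have : 11 / 32 * κ * d / u = 11 / 32 * (κ * d / u) := by ring
      rw [this]
      linarith
    have hwu : 0 ≤ w / u * κ := by positivity
    by_cases hsmall : θ ^ 2 * p ≤ 1 / 4
    · refine le_trans (mul_nonpos_of_nonneg_of_nonpos hwu (by linarith)) (by positivity)
    · push Not at hsmall
      have hθ7 : θ ≤ 7 / N := by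
        rw [hθ_def]
        gcongr
        linarith [Real.pi_lt_d2]
      have hθ2 : θ ^ 2 ≤ 49 / N ^ 2 := by
        refine (pow_le_pow_left₀ hθ.le hθ7 2).trans_eq ?_
        rw [div_pow]; norm_num
      have hN2 : (0 : ℝ) < N ^ 2 := by positivity
      have hubig : (N : ℝ) ^ 2 / 256 ≤ u := by
        have h1 : 1 / 4 < 49 / (N : ℝ) ^ 2 * p :=
          hsmall.trans_le (mul_le_mul_of_nonneg_right hθ2 hp0)
        rw [div_mul_eq_mul_div, lt_div_iff₀ hN2] at h1
        linarith
      have hw4 : w ≤ 4 * (N : ℝ) ^ (-(1 / 2) : ℝ) := by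
        refine (Real.rpow_le_rpow_of_nonpos (by positivity) hubig (by norm_num)).trans_eq ?_
        rw [Real.div_rpow hN2.le (by norm_num), ← Real.rpow_natCast, ← Real.rpow_mul hN0.le,
          show (256 : ℝ) = 4 ^ (4 : ℝ) by norm_num, ← Real.rpow_mul (by norm_num), div_eq_mul_inv,
          ← Real.rpow_neg (by norm_num)]
        norm_num
        ring
      calc w / u * κ * (-d / 2 + θ ^ 2 * p / 4 + 11 / 32 * κ * d / u + 11 / 8 * (p / u))
          ≤ w / u * κ * (θ ^ 2 * p / 4) := mul_le_mul_of_nonneg_left (by linarith) hwu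
        _ = w * (κ * (θ ^ 2 * (p / u))) / 4 := by field_simp
        _ ≤ w * (1 * (49 / N ^ 2 * 1)) / 4 := by gcongr
        _ ≤ 4 * (N : ℝ) ^ (-(1 / 2) : ℝ) * (1 * (49 / N ^ 2 * 1)) / 4 := by gcongr
        _ = 49 * ((N : ℝ) ^ (-2 : ℝ) * (N : ℝ) ^ (-(1 / 2) : ℝ)) := by
          rw [Real.rpow_neg hN0.le 2, Real.rpow_two]
          ring
  rw [nbrAvg, div_le_iff₀ (by positivity), add_mul, div_mul_cancel₀ _ (by positivity)]
  change _ ≤ w * (2 * d) + _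
  linarith

/-! ### A strictly superharmonic function near the origin -/

/-- A bounded positive function, strictly superharmonic at distance less than `N / 4`. -/
def tbump {d N : ℕ} (i : Fin d) (y : Torus d N) : ℝ :=
  2 + zcos (y i) - (2 * zcos (y i) ^ 2 - 1) / 8

lemma tbump_mem_Icc {d N : ℕ} (i : Fin d) (y : Torus d N) : tbump i y ∈ Set.Icc 0 4 := by
  have h1 : zcos (y i) ≤ 1 := Real.cos_le_one _
  have h2 : -1 ≤ zcos (y i) := Real.neg_one_le_cos _
  constructor <;> rw [tbump] <;> nlinarith

lemma nbrAvg_tbump_le {d N : ℕ} (hN : 4 ≤ N) (i : Fin d) {y : Torus d N}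
    (hy : y ∈ torusBall 0 ((N : ℝ) / 4)) :
    nbrAvg (tbump i) y ≤ tbump i y - 4 * (N : ℝ) ^ (-2 : ℝ) / (2 * d) := by
  have : NeZero N := ⟨by omega⟩
  have hd : (0 : ℝ) < d := by exact_mod_cast i.pos
  have hN4 : (4 : ℝ) ≤ N := by exact_mod_cast hN
  have hN0 : (0 : ℝ) < N := by linarith
  have hpi := Real.pi_pos
  have hc0 : 0 ≤ zcos (y i) := by
    have h1 : (zdist (y i) : ℝ) ≤ N / 4 :=
      le_trans (by exact_mod_cast zdist_le_torusDist y i) hy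
    rw [zcos_eq_cos_zdist]
    refine Real.cos_nonneg_of_neg_pi_div_two_le_of_le ?_ ?_
    · have : 0 ≤ 2 * Real.pi / N * zdist (y i) := by positivity
      linarith
    · calc 2 * Real.pi / N * zdist (y i) ≤ 2 * Real.pi / N * (N / 4) := by gcongr
        _ = Real.pi / 2 := by field_simp; norm_num
  have hc1 : zcos (y i) ≤ 1 := Real.cos_le_one _
  have hcs := zcos_sq_add_zsin_sq (y i)
  have hθ4 : 2 * Real.pi / N ≤ Real.pi / 2 := by
    rw [div_le_div_iff₀ hN0 (by norm_num)]
    nlinarith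
  have hθ : 0 < 2 * Real.pi / N := by positivity
  have ha0 : 0 ≤ Real.cos (2 * Real.pi / N) :=
    Real.cos_nonneg_of_neg_pi_div_two_le_of_le (by linarith) hθ4
  have ha1 : Real.cos (2 * Real.pi / N) ≤ 1 - 8 * (N : ℝ) ^ (-2 : ℝ) := by
    refine (Real.cos_le_one_sub_mul_cos_sq (by rw [abs_of_pos hθ]; linarith)).trans_eq ?_
    rw [Real.rpow_neg hN0.le, Real.rpow_two]
    field_simp
    norm_num
  have hab := Real.cos_sq_add_sin_sq (2 * Real.pi / N)
  have hN2 : 0 < (N : ℝ) ^ (-2 : ℝ) := Real.rpow_pos_of_pos hN0 _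
  have hterm : ∀ j, tbump i (y + Pi.single j 1) + tbump i (y - Pi.single j 1) =
      2 * tbump i y + if j = i then tbump i (y + Pi.single i 1) + tbump i (y - Pi.single i 1) -
        2 * tbump i y else 0 := by
    intro j
    split_ifs with hj
    · rw [hj]; ring
    · simp [tbump, Ne.symm hj]; ring
  have hincr : tbump i (y + Pi.single i 1) + tbump i (y - Pi.single i 1) - 2 * tbump i y ≤
      -(4 * (N : ℝ) ^ (-2 : ℝ)) := by
    simp only [tbump, Pi.add_apply, Pi.sub_apply, Pi.single_eq_same,
      zcos_add_one (by omega : 2 ≤ N), zcos_sub_one (by omega : 2 ≤ N)]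
    set c := zcos (y i)
    set s := zsin (y i)
    set a := Real.cos (2 * Real.pi / N)
    set b := Real.sin (2 * Real.pi / N)
    have hs : s ^ 2 = 1 - c ^ 2 := by linarith
    have hb : b ^ 2 = 1 - a ^ 2 := by linarith
    have hid : 2 + (c * a - s * b) - (2 * (c * a - s * b) ^ 2 - 1) / 8 +
        (2 + (c * a + s * b) - (2 * (c * a + s * b) ^ 2 - 1) / 8) -
        2 * (2 + c - (2 * c ^ 2 - 1) / 8) =
        -((1 - a) * (2 * c + (1 + a) / 2 * (1 - 2 * c ^ 2))) := by
      have : s ^ 2 * b ^ 2 = (1 - c ^ 2) * (1 - a ^ 2) := by rw [hs, hb]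
      linear_combination (-1 / 2 : ℝ) * this
    rw [hid]
    have hc2 : c ^ 2 ≤ c := by nlinarith
    have h1 : 1 / 2 ≤ 2 * c + (1 + a) / 2 * (1 - 2 * c ^ 2) := by
      have : (1 + a) / 2 * c ^ 2 ≤ 1 * c := by
        refine mul_le_mul (by linarith) hc2 (sq_nonneg _) zero_le_one
      linarith
    nlinarith
  rw [nbrAvg, div_le_iff₀ (by positivity), sub_mul, div_mul_cancel₀ _ (by positivity),
    Finset.sum_congr rfl fun j _ => hterm j, Finset.sum_add_distrib]
  simp only [Finset.sum_const, Finset.card_univ, Fintype.card_fin, nsmul_eq_mul,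
    Finset.sum_ite_eq', Finset.mem_univ, if_true]
  linarith

/-! ### Hitting probabilities of balls -/

lemma tpot_le_of_notMem_torusBall {d N : ℕ} [NeZero N] {y : Torus d N} {L : ℝ} (hL : 0 < L)
    (hy : y ∉ torusBall 0 L) : tpot y ≤ 2 * L ^ (-(1 / 2) : ℝ) := by
  have h4 : L ^ 2 / 4 = (L / 2) ^ (2 : ℝ) := by rw [Real.rpow_two]; ring
  have hle : tpot y ≤ (L ^ 2 / 4) ^ (-(1 / 4) : ℝ) :=
    Real.rpow_le_rpow_of_nonpos (by positivity) (le_tsq_of_notMem_torusBall hL.le hy) (by norm_num)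
  refine hle.trans ?_
  rw [h4, ← Real.rpow_mul (by positivity), show (2 : ℝ) * -(1 / 4) = -(1 / 2) by norm_num,
    Real.div_rpow hL.le zero_le_two, Real.rpow_neg zero_le_two, div_inv_eq_mul, mul_comm]
  gcongr
  exact Real.rpow_le_self_of_one_le one_le_two (by norm_num)

lemma inv_mul_rpow_le_tpot {d N : ℕ} {y : Torus d N} {K R : ℝ} (hK : 1 ≤ K) (hR : 1 ≤ R)
    (hy : tsq y ≤ K * R ^ 2) : (K * R ^ (1 / 2 : ℝ))⁻¹ ≤ tpot y := by
  have hR0 : 0 ≤ R := by linarith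
  have hy0 : 0 < tsq y := by linarith [le_tsq y]
  rw [tpot, Real.rpow_neg hy0.le]
  gcongr
  refine (Real.rpow_le_rpow hy0.le hy (by norm_num)).trans ?_
  rw [Real.mul_rpow (by linarith) (sq_nonneg R), ← Real.rpow_two, ← Real.rpow_mul hR0,
    show (2 : ℝ) * (1 / 4) = 1 / 2 by norm_num]
  gcongr
  exact Real.rpow_le_self_of_one_le hK (by norm_num)

lemma zero_mem_torusBall {d N : ℕ} {R : ℝ} (hR : 0 ≤ R) :
    (0 : Torus d N) ∈ torusBall 0 R := by
  have h : torusDist (0 : Torus d N) 0 = 0 := by simp [torusDist]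
  simpa [torusBall, h] using hR

/-- The walk started outside `B(0, L)` is unlikely to hit `B(0, R)` or its boundary before `t`. -/
lemma measure_hitT_union_extBdry_le {d N : ℕ} (hd : 3 ≤ d) (hN : 3 ≤ N) {R L t : ℝ}
    (hR : 1 ≤ R) (hL : 0 < L) (ht : 1 ≤ t) {x : Torus d N} (hx : x ∉ torusBall 0 L)
    {P : Measure (CTPath d N)} (hP : IsCTWalk P (pointInit x)) :
    (P {ω | hitT (torusBall 0 R ∪ extBdry adj (torusBall 0 R)) ω ≤ t}).toReal ≤
      3 * (d + 10000) * (R ^ (1 / 2 : ℝ) * (2 * L ^ (-(1 / 2) : ℝ)) +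
        343 * (t * (N : ℝ) ^ (-2 : ℝ) * (R ^ (1 / 2 : ℝ) * (N : ℝ) ^ (-(1 / 2) : ℝ)))) + 6 / t := by
  have : NeZero N := ⟨by omega⟩
  have hd' : (3 : ℝ) ≤ d := by exact_mod_cast hd
  have hR0 : 0 < R ^ (1 / 2 : ℝ) := Real.rpow_pos_of_pos (by linarith) _
  set V : Set (Torus d N) := torusBall 0 R ∪ extBdry adj (torusBall 0 R)
  set n := ⌈6 * t⌉₊
  have hn : 6 * t ≤ n := Nat.le_ceil _
  have hn' : (n : ℝ) ≤ 7 * t := by linarith [Nat.ceil_lt_add_one (show 0 ≤ 6 * t by linarith)]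
  have hn1 : 1 ≤ n := Nat.ceil_pos.2 (by linarith)
  have h36 : (36 : ℝ) / n ≤ 6 / t := by
    rw [div_le_div_iff₀ (by linarith) (by linarith)]
    linarith
  set K : ℝ := 3 * (d + 10000)
  have hK : 1 ≤ K := by simp only [K]; linarith
  set δ : ℝ := (N : ℝ) ^ (-2 : ℝ) * (N : ℝ) ^ (-(1 / 2) : ℝ) with hδ
  have hδ0 : 0 ≤ δ := by positivity
  have hstep : ∀ y ∈ Vᶜ, nbrAvg tpot y ≤ tpot y + 49 * δ := fun y _ => by
    refine (nbrAvg_tpot_le hd (by omega) y).trans (by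
      gcongr; exact div_le_self (by positivity) (by linarith))
  refine (measure_hitT_le (by omega) hN hP (Or.inl (zero_mem_torusBall (by linarith))) hn1 hn
    (p := K * R ^ (1 / 2 : ℝ) * (2 * L ^ (-(1 / 2) : ℝ) + 7 * t * (49 * δ))) ?_).trans ?_
  · intro μ hμ
    have h := mul_measureReal_hit_le hN hμ disjoint_compl_left (fun y => (tpot_pos y).le)
      (m := (K * R ^ (1 / 2 : ℝ))⁻¹) (by positivity) (by positivity)
      (fun y hy => inv_mul_rpow_le_tpot hK hR (tsq_le_of_mem_union_extBdry (by omega) hR hy))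
      hstep n
    rw [inv_mul_le_iff₀ (by positivity)] at h
    refine h.trans ?_
    gcongr
    exact tpot_le_of_notMem_torusBall hL hx
  · refine add_le_add (le_of_eq ?_) h36
    rw [hδ]
    ring

/-- The walk started outside `B(0, L)` is unlikely to hit `B(0, R)` before leaving
`B(0, N / 4)`. -/
lemma measure_hitT_le_exitT_torusBall {d N : ℕ} (hd : 3 ≤ d) (hN : 4 ≤ N) {R L : ℝ}
    (hR : 1 ≤ R) (hL : 0 < L) {x : Torus d N} (hx : x ∉ torusBall 0 L)
    {P : Measure (CTPath d N)} (hP : IsCTWalk P (pointInit x)) :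
    (P {ω | hitT (torusBall 0 R) ω ≤ exitT (torusBall 0 ((N : ℝ) / 4)) ω}).toReal ≤
      3 * (d + 10000) * (R ^ (1 / 2 : ℝ) * (2 * L ^ (-(1 / 2) : ℝ)) +
        49 * (R ^ (1 / 2 : ℝ) * (N : ℝ) ^ (-(1 / 2) : ℝ))) := by
  have : NeZero N := ⟨by omega⟩
  have hd' : (3 : ℝ) ≤ d := by exact_mod_cast hd
  have hR0 : 0 < R ^ (1 / 2 : ℝ) := Real.rpow_pos_of_pos (by linarith) _
  set K : ℝ := 3 * (d + 10000)
  have hK : 1 ≤ K := by simp only [K]; linarith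
  let i₀ : Fin d := ⟨0, by omega⟩
  set l : ℝ := 49 / 4 * (N : ℝ) ^ (-(1 / 2) : ℝ) with hl
  have hl0 : 0 ≤ l := by positivity
  have hb : ∀ y : Torus d N, 0 ≤ l * tbump i₀ y := fun y =>
    mul_nonneg hl0 (tbump_mem_Icc i₀ y).1
  refine measure_hitT_le_exitT (by omega) (by omega) hP (zero_mem_torusBall (by linarith))
    fun μ hμ => ?_
  refine (mul_measure_hit_le (by omega) hμ Set.disjoint_sdiff_left
    (f := fun y => tpot y + l * tbump i₀ y) (m := (K * R ^ (1 / 2 : ℝ))⁻¹)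
    (fun y => add_nonneg (tpot_pos y).le (hb y)) (by positivity) (fun y hy => ?_)
    (fun y hy => ?_)).trans ?_
  · exact (inv_mul_rpow_le_tpot hK hR
      (tsq_le_of_mem_union_extBdry (by omega) hR (Or.inl hy))).trans
      (le_add_of_nonneg_right (hb y))
  · have hlin : nbrAvg (fun y => tpot y + l * tbump i₀ y) y =
        nbrAvg tpot y + l * nbrAvg (tbump i₀) y := by
      simp only [nbrAvg]
      rw [← mul_div_assoc, ← add_div, Finset.mul_sum, ← Finset.sum_add_distrib]
      congr 1
      exact Finset.sum_congr rfl fun i _ => by ring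
    rw [hlin]
    have h1 := nbrAvg_tpot_le hd (by omega) y
    have h2 := mul_le_mul_of_nonneg_left (nbrAvg_tbump_le hN i₀ hy.1) hl0
    have h3 : l * (4 * (N : ℝ) ^ (-2 : ℝ) / (2 * d)) =
        49 * ((N : ℝ) ^ (-2 : ℝ) * (N : ℝ) ^ (-(1 / 2) : ℝ)) / (2 * d) := by
      rw [hl]; ring
    rw [mul_sub, h3] at h2
    linarith
  · rw [div_inv_eq_mul]
    have h1 := tpot_le_of_notMem_torusBall hL hx
    have h2 := mul_le_mul_of_nonneg_left (tbump_mem_Icc i₀ x).2 hl0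
    refine (mul_le_mul_of_nonneg_right (add_le_add h1 h2) (by positivity)).trans_eq ?_
    rw [hl]
    ring

lemma rpow_half_mul_rpow_neg_half_le {n R L a b s : ℝ} (hn : 1 ≤ n) (hR0 : 0 ≤ R)
    (hR : R ≤ n ^ a) (hL : n ^ b / 4 ≤ L) (hab : a - b ≤ -(2 * s)) :
    R ^ (1 / 2 : ℝ) * (2 * L ^ (-(1 / 2) : ℝ)) ≤ 4 * n ^ (-s) := by
  have hn0 : 0 < n := by linarith
  have hb : 0 < n ^ b := Real.rpow_pos_of_pos hn0 b
  have h1 : R ^ (1 / 2 : ℝ) ≤ n ^ (a / 2) := by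
    refine (Real.rpow_le_rpow hR0 hR (by norm_num)).trans_eq ?_
    rw [← Real.rpow_mul hn0.le]
    ring_nf
  have h2 : L ^ (-(1 / 2) : ℝ) ≤ 2 * n ^ (-b / 2) := by
    refine (Real.rpow_le_rpow_of_nonpos (by positivity) hL (by norm_num)).trans_eq ?_
    rw [Real.div_rpow hb.le (by norm_num), ← Real.rpow_mul hn0.le,
      show (4 : ℝ) = 2 ^ (2 : ℝ) by norm_num, ← Real.rpow_mul zero_le_two,
      show (2 : ℝ) * -(1 / 2) = -1 by norm_num, Real.rpow_neg_one, div_inv_eq_mul, mul_comm]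
    ring_nf
  calc R ^ (1 / 2 : ℝ) * (2 * L ^ (-(1 / 2) : ℝ))
      ≤ n ^ (a / 2) * (2 * (2 * n ^ (-b / 2))) := by
        gcongr
        have : 0 ≤ L := (by positivity : (0 : ℝ) ≤ n ^ b / 4).trans hL
        positivity
    _ = 4 * n ^ ((a - b) / 2) := by
        rw [show (a - b) / 2 = a / 2 + -b / 2 by ring, Real.rpow_add hn0]
        ring
    _ ≤ 4 * n ^ (-s) := by
        gcongr
        linarith

lemma rpow_half_mul_rpow_neg_half_self_le {n R a s : ℝ} (hn : 1 ≤ n) (hR0 : 0 ≤ R)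
    (hR : R ≤ n ^ a) (ha : a - 1 ≤ -(2 * s)) :
    R ^ (1 / 2 : ℝ) * n ^ (-(1 / 2) : ℝ) ≤ n ^ (-s) := by
  have hn0 : 0 < n := by linarith
  calc R ^ (1 / 2 : ℝ) * n ^ (-(1 / 2) : ℝ)
      ≤ (n ^ a) ^ (1 / 2 : ℝ) * n ^ (-(1 / 2) : ℝ) := by gcongr
    _ = n ^ ((a - 1) / 2) := by
        rw [← Real.rpow_mul hn0.le, ← Real.rpow_add hn0]
        ring_nf
    _ ≤ n ^ (-s) := Real.rpow_le_rpow_of_exponent_le hn (by linarith)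

lemma tstar_mul_rpow_neg_two_le {N : ℕ} (hN : 1 ≤ N) {s : ℝ} (hs : 0 < s) :
    tstar N * (N : ℝ) ^ (-2 : ℝ) ≤ s⁻¹ ^ 2 * (N : ℝ) ^ (2 * s) := by
  have hN1 : (1 : ℝ) ≤ N := by exact_mod_cast hN
  have hN0 : (0 : ℝ) < N := by linarith
  have hlog := Real.log_le_rpow_div hN0.le hs
  have h : tstar N * (N : ℝ) ^ (-2 : ℝ) = Real.log N ^ 2 := by
    rw [tstar, Real.rpow_neg hN0.le, Real.rpow_two]
    field_simp
  rw [h]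
  refine (pow_le_pow_left₀ (Real.log_nonneg hN1) hlog 2).trans_eq ?_
  rw [div_eq_inv_mul, mul_pow, ← Real.rpow_natCast (_ ^ s), ← Real.rpow_mul hN0.le]
  push_cast
  ring_nf

lemma sq_le_tstar {N : ℕ} (hN : 3 ≤ N) : (N : ℝ) ^ 2 ≤ tstar N := by
  have hN3 : (3 : ℝ) ≤ N := by exact_mod_cast hN
  have hlog : 1 ≤ Real.log N := by
    rw [Real.le_log_iff_exp_le (by linarith)]
    linarith [Real.exp_one_lt_d9]
  rw [tstar, mul_pow]
  exact le_mul_of_one_le_right (by positivity) (one_le_pow₀ hlog)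

lemma IsCTWalk.toReal_le_one {d N : ℕ} {P : Measure (CTPath d N)} {init : Torus d N → ℝ≥0∞}
    (hP : IsCTWalk P init) (E : Set (CTPath d N)) : (P E).toReal ≤ 1 := by
  obtain ⟨μ, ν, hμ, hν, rfl⟩ := hP
  have := hμ.1
  have := hν.1
  exact measureReal_le_one (μ := μ.prod ν)

lemma measure_hitT_le_tstar {d N : ℕ} (hd : 3 ≤ d) (hN : 4 ≤ N) {ε a b R L : ℝ} (hε : 0 < ε)
    (hε1 : ε < 1) (hR : 1 ≤ R) (hRa : R ≤ (N : ℝ) ^ a) (hLb : (N : ℝ) ^ b / 4 ≤ L)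
    (hab : a - b ≤ -(ε / 2)) (ha : a - 1 ≤ -(ε / 2)) {x : Torus d N}
    (hx : x ∉ torusBall 0 L) {P : Measure (CTPath d N)} (hP : IsCTWalk P (pointInit x)) :
    (P {ω | hitT (torusBall 0 R ∪ extBdry adj (torusBall 0 R)) ω ≤ tstar N}).toReal ≤
      (3 * (d + 10000) * (4 + 343 * (ε / 16)⁻¹ ^ 2) + 6) * (N : ℝ) ^ (-(ε / 8)) := by
  have hN4 : (4 : ℝ) ≤ N := by exact_mod_cast hN
  have hN1 : (1 : ℝ) ≤ N := by linarith
  have hN0 : (0 : ℝ) < N := by linarith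
  have ht := sq_le_tstar (by omega : 3 ≤ N)
  have ht1 : 1 ≤ tstar N := by nlinarith
  have hL0 : 0 < L := (div_pos (Real.rpow_pos_of_pos hN0 b) four_pos).trans_le hLb
  have h1 : R ^ (1 / 2 : ℝ) * (2 * L ^ (-(1 / 2) : ℝ)) ≤ 4 * (N : ℝ) ^ (-(ε / 8)) :=
    rpow_half_mul_rpow_neg_half_le hN1 (by linarith) hRa hLb (by linarith)
  have h2 : tstar N * (N : ℝ) ^ (-2 : ℝ) * (R ^ (1 / 2 : ℝ) * (N : ℝ) ^ (-(1 / 2) : ℝ)) ≤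
      (ε / 16)⁻¹ ^ 2 * (N : ℝ) ^ (-(ε / 8)) := by
    calc _ ≤ (ε / 16)⁻¹ ^ 2 * (N : ℝ) ^ (2 * (ε / 16)) * (N : ℝ) ^ (-(ε / 4)) := by
          refine mul_le_mul (tstar_mul_rpow_neg_two_le (by omega) (by linarith)) ?_
            (by positivity) (by positivity)
          exact rpow_half_mul_rpow_neg_half_self_le hN1 (by linarith) hRa (by linarith)
      _ = (ε / 16)⁻¹ ^ 2 * (N : ℝ) ^ (-(ε / 8)) := by
          rw [mul_assoc, ← Real.rpow_add hN0]
          ring_nf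
  have h3 : 6 / tstar N ≤ 6 * (N : ℝ) ^ (-(ε / 8)) := by
    rw [div_eq_mul_inv]
    gcongr
    refine (inv_anti₀ (by positivity) ht).trans ?_
    rw [← Real.rpow_two, ← Real.rpow_neg hN0.le]
    exact Real.rpow_le_rpow_of_exponent_le hN1 (by linarith)
  refine (measure_hitT_union_extBdry_le hd (by omega) hR hL0 ht1 hx hP).trans ?_
  refine (add_le_add (mul_le_mul_of_nonneg_left (add_le_add h1
    (mul_le_mul_of_nonneg_left h2 (by norm_num))) (by positivity)) h3).trans_eq ?_
  ring

/-- **Lemma (basic hitting estimates).**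
With `A = B(0,r_N)`, `B = B(0,N^{1−ε/2})`, `B' = B(0,N^{1−ε/2}/2)`,
`C = B(0,N/4)` and `t_* = (N log N)²`:
(i) `sup_{x∉B'} P_x[H_A ≤ T_C] ≤ c N^{−c'}`;
(ii) `sup_{x∉B} P_x[H_{A ∪ ∂_e A} ≤ t_*] ≤ c N^{−c'}`;
(iii) `sup_{x∉C} P_x[H_{B ∪ ∂_e B} ≤ t_*] ≤ c N^{−c'}`. -/
theorem basic_hitting_estimates
    (d : ℕ) (hd : 3 ≤ d) (ε : ℝ) (hε : 0 < ε ∧ ε < 1) :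
    ∃ c c' : ℝ, 0 < c ∧ 0 < c' ∧ ∀ N : ℕ, 2 ≤ N →
      ∀ rN : ℝ, 1 ≤ rN → rN ≤ (N : ℝ) ^ (1 - ε) →
        (∀ x : Torus d N, x ∉ torusBall (0 : Torus d N) ((N : ℝ) ^ (1 - ε / 2) / 2) →
          ∀ P : Measure (CTPath d N), IsCTWalk P (pointInit x) →
            (P {ω | hitT (torusBall (0 : Torus d N) rN) ω ≤
                exitT (torusBall (0 : Torus d N) ((N : ℝ) / 4)) ω}).toReal ≤
              c * (N : ℝ) ^ (-c')) ∧
        (∀ x : Torus d N, x ∉ torusBall (0 : Torus d N) ((N : ℝ) ^ (1 - ε / 2)) →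
          ∀ P : Measure (CTPath d N), IsCTWalk P (pointInit x) →
            (P {ω | hitT (torusBall (0 : Torus d N) rN ∪
                extBdry adj (torusBall (0 : Torus d N) rN)) ω ≤ tstar N}).toReal ≤
              c * (N : ℝ) ^ (-c')) ∧
        (∀ x : Torus d N, x ∉ torusBall (0 : Torus d N) ((N : ℝ) / 4) →
          ∀ P : Measure (CTPath d N), IsCTWalk P (pointInit x) →
            (P {ω | hitT (torusBall (0 : Torus d N) ((N : ℝ) ^ (1 - ε / 2)) ∪
                extBdry adj (torusBall (0 : Torus d N) ((N : ℝ) ^ (1 - ε / 2)))) ω ≤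
                tstar N}).toReal ≤
              c * (N : ℝ) ^ (-c')) := by
  obtain ⟨hε0, hε1⟩ := hε
  have hd' : (3 : ℝ) ≤ d := by exact_mod_cast hd
  set c : ℝ := 3 * (d + 10000) * (53 + 343 * (ε / 16)⁻¹ ^ 2) + 6 with hc
  have hc3 : 3 ≤ c := by
    have : 0 ≤ 3 * (d + 10000) * (53 + 343 * (ε / 16)⁻¹ ^ 2) := by positivity
    linarith
  have hmono : 3 * (d + 10000) * (4 + 343 * (ε / 16)⁻¹ ^ 2) + 6 ≤ c := by
    rw [hc]; gcongr; norm_num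
  refine ⟨c, ε / 8, by linarith, by linarith, fun N hN rN hrN hrN' => ?_⟩
  have hN1 : (1 : ℝ) ≤ N := by exact_mod_cast (by omega : 1 ≤ N)
  have hN0 : (0 : ℝ) < N := by linarith
  rcases lt_or_ge N 4 with hN4 | hN4
  · have hN3 : (N : ℝ) ≤ 3 := by exact_mod_cast (by omega : N ≤ 3)
    have htriv : 1 ≤ c * (N : ℝ) ^ (-(ε / 8)) := by
      calc (1 : ℝ) = N * (N : ℝ) ^ (-1 : ℝ) := by
            rw [Real.rpow_neg_one, mul_inv_cancel₀ hN0.ne']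
        _ ≤ c * (N : ℝ) ^ (-(ε / 8)) := by
            gcongr
            · linarith
            · linarith
    exact ⟨fun x _ P hP => (hP.toReal_le_one _).trans htriv,
      fun x _ P hP => (hP.toReal_le_one _).trans htriv,
      fun x _ P hP => (hP.toReal_le_one _).trans htriv⟩
  have hpow : 0 < (N : ℝ) ^ (1 - ε / 2) := Real.rpow_pos_of_pos hN0 _
  have hE : 0 < (N : ℝ) ^ (-(ε / 8)) := Real.rpow_pos_of_pos hN0 _
  refine ⟨fun x hx P hP => ?_, fun x hx P hP => ?_, fun x hx P hP => ?_⟩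
  · refine (measure_hitT_le_exitT_torusBall hd hN4 hrN (by positivity) hx hP).trans ?_
    have h1 : rN ^ (1 / 2 : ℝ) * (2 * ((N : ℝ) ^ (1 - ε / 2) / 2) ^ (-(1 / 2) : ℝ)) ≤
        4 * (N : ℝ) ^ (-(ε / 8)) :=
      rpow_half_mul_rpow_neg_half_le hN1 (by linarith) hrN'
        (by linarith : (N : ℝ) ^ (1 - ε / 2) / 4 ≤ _) (by linarith)
    have h2 : rN ^ (1 / 2 : ℝ) * (N : ℝ) ^ (-(1 / 2) : ℝ) ≤ (N : ℝ) ^ (-(ε / 8)) :=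
      rpow_half_mul_rpow_neg_half_self_le hN1 (by linarith) hrN' (by linarith)
    calc _ ≤ 3 * (d + 10000) * (4 * (N : ℝ) ^ (-(ε / 8)) + 49 * (N : ℝ) ^ (-(ε / 8))) := by
          gcongr
      _ = 3 * (d + 10000) * (53 + 0) * (N : ℝ) ^ (-(ε / 8)) := by ring
      _ ≤ (3 * (d + 10000) * (53 + 343 * (ε / 16)⁻¹ ^ 2) + 6) * (N : ℝ) ^ (-(ε / 8)) := by
          refine mul_le_mul_of_nonneg_right ?_ hE.le
          refine le_add_of_le_of_nonneg ?_ (by norm_num)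
          gcongr
          positivity
  · exact (measure_hitT_le_tstar hd hN4 hε0 hε1 hrN hrN'
      (by linarith : (N : ℝ) ^ (1 - ε / 2) / 4 ≤ _) (by linarith) (by linarith) hx hP).trans
      (mul_le_mul_of_nonneg_right hmono hE.le)
  · exact (measure_hitT_le_tstar hd hN4 hε0 hε1 (Real.one_le_rpow hN1 (by linarith)) le_rfl
      (by rw [Real.rpow_one] : (N : ℝ) ^ (1 : ℝ) / 4 ≤ _) (by linarith) (by linarith) hx hP).trans
      (mul_le_mul_of_nonneg_right hmono hE.le)

end Frag
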